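/- arXiv:1111.3890 — 3 statements merged into one kernel-verified Lean document; each statement's English description precedes it below -/
import Mathlib

section
/- Let (R,S,P,Q,φ,ψ) be a Morita context over k and let M be an (R,R)-bimodule with symmetric k-action. Then the chain maps θ_• : C_•(R,M) → C_•(S,M̃) and γ_• : C_•(S,M̃) → C_•(R,M) are mutually inverse up to chain homotopy; in particular, for every n ≥ 0 the map induced by θ on homology is a k-module isomorphism H_n(R,M) ≅ H_n(S, P ⊗_R M ⊗_R Q) (Morita invariance of Hochschild homology). -/
open scoped TensorProduct
open MulOpposite

universe u

/-- The `k`-submodule of balancing relations `(m·a) ⊗ n − m ⊗ (a·n)` inside `M ⊗[k] N`,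
for a `k`-algebra `A`, a right `A`-module `M` and a left `A`-module `N`.  The balanced
tensor product `M ⊗_A N` is the quotient of `M ⊗[k] N` by this submodule. -/
def midRel (k A M N : Type u) [CommRing k] [Ring A] [Algebra k A]
    [AddCommGroup M] [Module k M] [Module Aᵐᵒᵖ M]
    [AddCommGroup N] [Module k N] [Module A N] :
    Submodule k (TensorProduct k M N) :=
  Submodule.span k {x | ∃ (m : M) (a : A) (n : N),
    x = (op a • m) ⊗ₜ[k] n - m ⊗ₜ[k] (a • n)}

/-- A Morita context `(R, S, P, Q, φ, ψ)` over the commutative ground ring `k`: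
`P` is an `(S,R)`-bimodule and `Q` an `(R,S)`-bimodule (both with symmetric `k`-action,
right actions being encoded as left actions of the opposite algebras), and `φ` and `ψ` are
`k`-bilinear pairings `P × Q → S` and `Q × P → R` which descend to bimodule isomorphisms
`φ : P ⊗_R Q ≅ S` and `ψ : Q ⊗_S P ≅ R` on the balanced tensor products:  the lifted maps on
`P ⊗[k] Q` resp. `Q ⊗[k] P` are surjective and their kernels are exactly the corresponding
submodules of balancing relations (so that the induced maps on the quotients realizing
`P ⊗_R Q` and `Q ⊗_S P` are well defined bijections); moreover the compatibilities
`φ(p ⊗ q)·p' = p·ψ(q ⊗ p')` and `ψ(q ⊗ p)·q' = q·φ(p ⊗ q')` hold. -/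
structure MoritaContext (k R S P Q : Type u) [CommRing k] [Ring R] [Ring S]
    [Algebra k R] [Algebra k S]
    [AddCommGroup P] [Module k P] [Module S P] [Module Rᵐᵒᵖ P]
    [SMulCommClass S Rᵐᵒᵖ P] [IsScalarTower k S P] [IsScalarTower k Rᵐᵒᵖ P]
    [AddCommGroup Q] [Module k Q] [Module R Q] [Module Sᵐᵒᵖ Q]
    [SMulCommClass R Sᵐᵒᵖ Q] [IsScalarTower k R Q] [IsScalarTower k Sᵐᵒᵖ Q] : Type u where
  φ : P →ₗ[k] Q →ₗ[k] S
  ψ : Q →ₗ[k] P →ₗ[k] R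
  φ_ker : LinearMap.ker (TensorProduct.lift φ) = midRel k R P Q
  φ_surj : Function.Surjective (TensorProduct.lift φ)
  ψ_ker : LinearMap.ker (TensorProduct.lift ψ) = midRel k S Q P
  ψ_surj : Function.Surjective (TensorProduct.lift ψ)
  φ_left : ∀ (s : S) (p : P) (q : Q), φ (s • p) q = s * φ p q
  φ_right : ∀ (s : S) (p : P) (q : Q), φ p (op s • q) = φ p q * s
  ψ_left : ∀ (r : R) (q : Q) (p : P), ψ (r • q) p = r * ψ q p
  ψ_right : ∀ (r : R) (q : Q) (p : P), ψ q (op r • p) = ψ q p * r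
  assoc_φψ : ∀ (p : P) (q : Q) (p' : P), φ p q • p' = op (ψ q p') • p
  assoc_ψφ : ∀ (q : Q) (p : P) (q' : Q), ψ q p • q' = op (φ p q') • q

section Hochschild

variable (k : Type u) [CommRing k]

/-- The `n`-th Hochschild chain module `C_n(A, N) = N ⊗_k A^{⊗_k n}`. -/
abbrev HChain (A N : Type u) [Ring A] [Algebra k A] [AddCommGroup N] [Module k N]
    (n : ℕ) :=
  N ⊗[k] (PiTensorProduct k (fun _ : Fin n => A))

/-- The generator `m ⊗ r₁ ⊗ ⋯ ⊗ rₙ` of `C_n(A, N)`. -/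
noncomputable def hgen {A N : Type u} [Ring A] [Algebra k A] [AddCommGroup N] [Module k N]
    {n : ℕ} (m : N) (r : Fin n → A) : HChain k A N n :=
  m ⊗ₜ[k] PiTensorProduct.tprod k r

/-- The tuple obtained from the tuple `r` of length `n + 1` by multiplying the entries at
the (0-based) positions `j` and `j + 1` (all other entries are kept, in their order). -/
def mergeAt {A : Type u} [Mul A] {n : ℕ} (r : Fin (n + 1) → A) (j : Fin n) : Fin n → A :=
  fun l =>
    if l.val < j.val then r l.castSucc
    else if l.val = j.val then r l.castSucc * r l.succ
    else r l.succ

end Hochschild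

section Homology

variable {k : Type u} [CommRing k]

/-- The homology in degree `n` of a chain complex of `k`-modules concentrated in
non-negative degrees, presented by its differentials `D n : T (n+1) →ₗ T n` with
`D ∘ D = 0` (in degree `0` this is the cokernel of `D 0`). -/
noncomputable def homologyAt {T : ℕ → Type u} [∀ n, AddCommGroup (T n)]
    [∀ n, Module k (T n)] (D : ∀ n, T (n + 1) →ₗ[k] T n)
    (hsq : ∀ n, (D n).comp (D (n + 1)) = 0) : ℕ → Type u
  | 0 => T 0 ⧸ LinearMap.range (D 0)
  | (n + 1) =>
      LinearMap.ker (D n) ⧸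
        LinearMap.range ((D (n + 1)).codRestrict (LinearMap.ker (D n)) fun x => by
          have h := LinearMap.congr_fun (hsq n) x
          simpa [LinearMap.mem_ker] using h)

noncomputable instance homologyAt.addCommGroup {T : ℕ → Type u} [∀ n, AddCommGroup (T n)]
    [∀ n, Module k (T n)] (D : ∀ n, T (n + 1) →ₗ[k] T n)
    (hsq : ∀ n, (D n).comp (D (n + 1)) = 0) (n : ℕ) :
    AddCommGroup (homologyAt D hsq n) := by
  cases n <;> (unfold homologyAt; infer_instance)

noncomputable instance homologyAt.module {T : ℕ → Type u} [∀ n, AddCommGroup (T n)]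
    [∀ n, Module k (T n)] (D : ∀ n, T (n + 1) →ₗ[k] T n)
    (hsq : ∀ n, (D n).comp (D (n + 1)) = 0) (n : ℕ) :
    Module k (homologyAt D hsq n) := by
  cases n <;> (unfold homologyAt; infer_instance)

/-- The map induced on homology by a chain map `f`. -/
noncomputable def inducedMap {T T' : ℕ → Type u} [∀ n, AddCommGroup (T n)]
    [∀ n, Module k (T n)] [∀ n, AddCommGroup (T' n)] [∀ n, Module k (T' n)]
    (D : ∀ n, T (n + 1) →ₗ[k] T n) (hsq : ∀ n, (D n).comp (D (n + 1)) = 0)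
    (D' : ∀ n, T' (n + 1) →ₗ[k] T' n) (hsq' : ∀ n, (D' n).comp (D' (n + 1)) = 0)
    (f : ∀ n, T n →ₗ[k] T' n)
    (hf : ∀ n, (D' n).comp (f (n + 1)) = (f n).comp (D n)) :
    ∀ n, homologyAt D hsq n →ₗ[k] homologyAt D' hsq' n
  | 0 => Submodule.mapQ _ _ (f 0) (by
      rintro x ⟨y, rfl⟩
      refine ⟨f 1 y, ?_⟩
      have := LinearMap.congr_fun (hf 0) y
      simpa using this)
  | (n + 1) => Submodule.mapQ _ _
      ((f (n + 1)).restrict (p := LinearMap.ker (D n)) (q := LinearMap.ker (D' n))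
        (fun x hx => by
          have h1 := LinearMap.congr_fun (hf n) x
          simp only [LinearMap.comp_apply] at h1
          simp only [LinearMap.mem_ker] at hx ⊢
          rw [h1, hx, map_zero]))
      (by
        rintro x ⟨y, rfl⟩
        refine ⟨f (n + 2) y, ?_⟩
        apply Subtype.ext
        have := LinearMap.congr_fun (hf (n + 1)) y
        simpa [LinearMap.restrict_apply] using this)

end Homology


set_option linter.unusedSectionVars false

namespace HochMor

section
variable {k : Type u} [CommRing k] {A N : Type u} [Ring A] [Algebra k A]
  [AddCommGroup N] [Module k N]

theorem ext_hgen {X : Type u} [AddCommGroup X] [Module k X] {n : ℕ}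
    {f g : HChain k A N n →ₗ[k] X}
    (h : ∀ (m : N) (r : Fin n → A), f (hgen k m r) = g (hgen k m r)) : f = g := by
  apply TensorProduct.ext
  ext m r
  exact h m r

noncomputable def snE (n : ℕ) : HChain k A N n ⊗[k] A ≃ₗ[k] HChain k A N (n + 1) :=
  (TensorProduct.assoc k N _ A).trans
    (TensorProduct.congr (LinearEquiv.refl k N)
      ((TensorProduct.congr (LinearEquiv.refl k _)
        (PiTensorProduct.subsingletonEquiv (R := k) (s := fun _ : Fin 1 => A) (0 : Fin 1)).symm).trans
        (TensorPower.mulEquiv (R := k) (M := A) (n := n) (m := 1))))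

noncomputable def sn (n : ℕ) : HChain k A N n →ₗ[k] A →ₗ[k] HChain k A N (n + 1) :=
  (TensorProduct.mk k _ _).compr₂ (snE n).toLinearMap

theorem sn_hgen {n : ℕ} (m : N) (r : Fin n → A) (a : A) :
    sn n (hgen k m r) a = hgen k m (Fin.snoc r a : Fin (n + 1) → A) := by
  have h := TensorPower.tprod_mul_tprod (R := k) (M := A) r (fun _ : Fin 1 => a)
  rw [TensorPower.gMul_def] at h
  simp only [sn, snE, hgen, LinearMap.compr₂_apply, TensorProduct.mk_apply,
    LinearEquiv.coe_coe, LinearEquiv.trans_apply, TensorProduct.assoc_tmul,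
    TensorProduct.congr_tmul, LinearEquiv.refl_apply,
    PiTensorProduct.subsingletonEquiv_symm_apply']
  rw [h, Fin.append_right_eq_snoc]

noncomputable def elim {X : Type u} [AddCommGroup X] [Module k X] {n : ℕ}
    (f : HChain k A N n →ₗ[k] A →ₗ[k] X) : HChain k A N (n + 1) →ₗ[k] X :=
  (TensorProduct.lift f).comp (snE n).symm.toLinearMap

@[simp] theorem elim_sn {X : Type u} [AddCommGroup X] [Module k X] {n : ℕ}
    (f : HChain k A N n →ₗ[k] A →ₗ[k] X) (x : HChain k A N n) (a : A) :
    elim f (sn n x a) = f x a := by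
  simp [elim, sn]

theorem ext_sn {X : Type u} [AddCommGroup X] [Module k X] {n : ℕ}
    {f g : HChain k A N (n + 1) →ₗ[k] X}
    (h : ∀ (x : HChain k A N n) (a : A), f (sn n x a) = g (sn n x a)) : f = g := by
  have : f.comp (snE n).toLinearMap = g.comp (snE n).toLinearMap := by
    apply TensorProduct.ext'
    intro x a
    exact h x a
  refine LinearMap.ext fun x => ?_
  have h2 := LinearMap.congr_fun this ((snE n).symm x)
  simpa using h2

noncomputable def zE : HChain k A N 0 ≃ₗ[k] N :=
  (TensorProduct.congr (LinearEquiv.refl k N) (PiTensorProduct.isEmptyEquiv (R := k) (Fin 0))).trans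
    (TensorProduct.rid k N)

theorem zE_hgen (m : N) (r : Fin 0 → A) : zE (hgen k m r) = m := by
  simp [zE, hgen]

theorem zE_symm (m : N) (r : Fin 0 → A) : zE.symm m = hgen k m r := by
  rw [LinearEquiv.symm_apply_eq, zE_hgen]

variable [Module A N] [Module Aᵐᵒᵖ N] [SMulCommClass A Aᵐᵒᵖ N] [IsScalarTower k A N]
  [IsScalarTower k Aᵐᵒᵖ N]

noncomputable def rN : N →ₗ[k] A →ₗ[k] N :=
  LinearMap.mk₂ k (fun m a => op a • m) (by intros; simp) 
    (by intro c m a; exact (smul_comm c (op a) m).symm ) (by intros; simp [add_smul]) (by intros; simp)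

@[simp] theorem rN_apply (m : N) (a : A) : rN (k := k) m a = op a • m := rfl

noncomputable def lam (n : ℕ) : A →ₗ[k] HChain k A N n →ₗ[k] HChain k A N n :=
  (LinearMap.rTensorHom _).comp (Algebra.lsmul k k N).toLinearMap

omit [Module Aᵐᵒᵖ N] [SMulCommClass A Aᵐᵒᵖ N] [IsScalarTower k Aᵐᵒᵖ N] in
theorem lam_hgen {n : ℕ} (a : A) (m : N) (r : Fin n → A) :
    lam n a (hgen k m r) = hgen k (a • m) r := by
  simp [lam, hgen]

theorem lam_sn {n : ℕ} (a : A) (x : HChain k A N n) (t : A) :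
    lam (n + 1) a (sn n x t) = sn n (lam n a x) t := by
  have : (lam (k := k) (N := N) (n + 1) a).comp ((sn n).flip t) = ((sn n).flip t).comp (lam n a) := by
    apply ext_hgen
    intro m r
    simp [lam_hgen, sn_hgen]
  exact LinearMap.congr_fun this x

noncomputable def mr : ∀ n : ℕ, HChain k A N n →ₗ[k] A →ₗ[k] HChain k A N n
  | 0 => ((rN (k := k)).comp zE.toLinearMap).compr₂ zE.symm.toLinearMap
  | (n + 1) => elim (LinearMap.mk₂ k (fun x t => (sn n x).comp (LinearMap.mulLeft k t))
      (by intros; ext; simp) (by intros; ext; simp) (by intros; ext; simp [add_mul])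
      (by intros; ext; simp))

theorem mr_zero (m : N) (a : A) (r : Fin 0 → A) :
    mr 0 (hgen k m r) a = hgen k (op a • m) r := by
  simp only [mr, LinearMap.compr₂_apply, LinearMap.comp_apply, LinearEquiv.coe_coe, zE_hgen,
    rN_apply]
  exact zE_symm _ _

theorem mr_sn {n : ℕ} (x : HChain k A N n) (t a : A) :
    mr (n + 1) (sn n x t) a = sn n x (t * a) := by
  simp [mr]

noncomputable def bp : ∀ n : ℕ, HChain k A N (n + 1) →ₗ[k] HChain k A N n
  | 0 => elim (-mr 0)
  | (n + 1) => elim (-mr (n + 1) - (sn n).comp (bp n))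

theorem bp_zero (x : HChain k A N 0) (s : A) : bp 0 (sn 0 x s) = - mr 0 x s := by
  simp [bp]

theorem bp_succ {n : ℕ} (x : HChain k A N (n + 1)) (s : A) :
    bp (n + 1) (sn (n + 1) x s) = - mr (n + 1) x s - sn n (bp n x) s := by
  simp [bp]

noncomputable def D0 (n : ℕ) : HChain k A N (n + 1) →ₗ[k] HChain k A N n :=
  elim (lam n).flip

theorem D0_sn {n : ℕ} (x : HChain k A N n) (s : A) : D0 n (sn n x s) = lam n s x := by
  simp [D0]

/-! comparison with the boundary -/

theorem tail_snoc' {n : ℕ} (r : Fin (n + 1) → A) (a : A) :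
    Fin.tail (Fin.snoc r a : Fin (n + 2) → A) = (Fin.snoc (Fin.tail r) a : Fin (n + 1) → A) := by
  funext l
  refine Fin.lastCases ?_ (fun j => ?_) l
  · rw [Fin.snoc_last, Fin.tail, Fin.succ_last, Fin.snoc_last]
  · simp [Fin.tail, ← Fin.castSucc_succ]

theorem merge_cast {n : ℕ} (r : Fin (n + 1) → A) (a : A) (j : Fin n) :
    mergeAt (Fin.snoc r a : Fin (n + 2) → A) j.castSucc = (Fin.snoc (mergeAt r j) a : Fin (n + 1) → A) := by
  funext l
  refine Fin.lastCases ?_ (fun i => ?_) l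
  · have h1 : ¬ (n < j.val) := by omega
    have h2 : ¬ (n = j.val) := by omega
    simp [mergeAt, h1, h2]
  · simp [mergeAt, ← Fin.castSucc_succ]

theorem merge_last {n : ℕ} (r : Fin n → A) (t a : A) :
    mergeAt (Fin.snoc (Fin.snoc r t : Fin (n + 1) → A) a : Fin (n + 2) → A) (Fin.last n)
      = (Fin.snoc r (t * a) : Fin (n + 1) → A) := by
  funext l
  refine Fin.lastCases ?_ (fun i => ?_) l
  · simp [mergeAt]
  · simp [mergeAt]

theorem bp_hgen : ∀ (n : ℕ) (m : N) (r : Fin (n + 1) → A),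
    bp n (hgen k m r) = ∑ j : Fin n, ((-1 : ℤ) ^ (n - j.val)) • hgen k m (mergeAt r j)
          + ((-1 : ℤ) ^ (n + 1)) • hgen k (op (r 0) • m) (Fin.tail r)
  | 0, m, r => by
    obtain ⟨r', a, rfl⟩ : ∃ r' a, r = (Fin.snoc r' a : Fin 1 → A) :=
      ⟨Fin.init r, r (Fin.last _), (Fin.snoc_init_self r).symm⟩
    rw [← sn_hgen, bp_zero, mr_zero]
    simp
    congr 2
    exact Subsingleton.elim _ _
  | (n + 1), m, r => by
    obtain ⟨r', a, rfl⟩ : ∃ r' a, r = (Fin.snoc r' a : Fin (n + 2) → A) :=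
      ⟨Fin.init r, r (Fin.last _), by simp⟩
    rw [← sn_hgen, bp_succ, bp_hgen n]
    obtain ⟨r, t, rfl⟩ : ∃ r t, r' = (Fin.snoc r t : Fin (n + 1) → A) :=
      ⟨Fin.init r', r' (Fin.last _), by simp⟩
    rw [Fin.sum_univ_castSucc]
    simp only [merge_last, merge_cast, tail_snoc']
    have h0 : (Fin.snoc (Fin.snoc r t : Fin (n + 1) → A) a : Fin (n + 2) → A) 0 
      = (Fin.snoc r t : Fin (n + 1) → A) 0 := by
      rw [← Fin.castSucc_zero, Fin.snoc_castSucc]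
    rw [h0]
    have hs : ∀ j : Fin n, ((-1 : ℤ) ^ (n + 1 - j.castSucc.val)) = - (-1 : ℤ) ^ (n - j.val) := by
      intro j
      have : n + 1 - j.castSucc.val = (n - j.val) + 1 := by
        simp; omega
      rw [this, pow_succ]; ring
    simp only [hs]
    rw [← sn_hgen m r t, mr_sn, sn_hgen]
    simp only [map_add, map_sum, map_zsmul, LinearMap.add_apply, LinearMap.sum_apply, sn_hgen,
      LinearMap.smul_apply, neg_smul, Finset.sum_neg_distrib]
    have : (-1 : ℤ) ^ (n + 1 + 1) = - (-1 : ℤ) ^ (n + 1) := by rw [pow_succ]; ring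
    rw [this]
    simp
    abel

theorem b_eq {n : ℕ} (b : HChain k A N (n + 1) →ₗ[k] HChain k A N n)
    (hb : ∀ (m : N) (r : Fin (n + 1) → A),
      b (hgen k m r) =
        hgen k (r (Fin.last n) • m) (Fin.init r)
          + ∑ j : Fin n, ((-1 : ℤ) ^ (n - j.val)) • hgen k m (mergeAt r j)
          + ((-1 : ℤ) ^ (n + 1)) • hgen k (op (r 0) • m) (Fin.tail r)) :
    b = D0 n + bp n := by
  apply ext_hgen
  intro m r
  rw [hb, LinearMap.add_apply, bp_hgen, ← add_assoc]
  congr 2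
  have : r = (Fin.snoc (Fin.init r) (r (Fin.last n)) : Fin (n + 1) → A) := by simp
  rw [this, ← sn_hgen, D0_sn, lam_hgen]
  simp

variable {α : Type u} [Fintype α] (a b : α → A)

noncomputable def W : ∀ n : ℕ, α → HChain k A N n →ₗ[k] HChain k A N n
  | 0, β => (mr 0).flip (a β)
  | (n + 1), β => elim (∑ γ : α, (sn n).compl₁₂ (W n γ)
      ((LinearMap.mulRight k (a β)).comp (LinearMap.mulLeft k (b γ))))

theorem W_zero (β : α) (x : HChain k A N 0) : W a b 0 β x = mr 0 x (a β) := rfl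

theorem W_sn {n : ℕ} (β : α) (x : HChain k A N n) (r : A) :
    W a b (n + 1) β (sn n x r) = ∑ γ : α, sn n (W a b n γ x) (b γ * r * a β) := by
  simp [W, LinearMap.sum_apply]

theorem lam_mr0 (s t : A) (x : HChain k A N 0) :
    lam 0 s (mr 0 x t) = mr 0 (lam 0 s x) t := by
  have : (lam (k := k) (N := N) 0 s).comp ((mr 0).flip t) = ((mr 0).flip t).comp (lam 0 s) := by
    apply ext_hgen
    intro m r
    simp [lam_hgen, mr_zero, smul_comm]
  exact LinearMap.congr_fun this x

theorem mr_mr0 (s t : A) (x : HChain k A N 0) :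
    mr 0 (mr 0 x s) t = mr 0 x (s * t) := by
  have : ((mr (k := k) (N := N) 0).flip t).comp ((mr 0).flip s) = (mr 0).flip (s * t) := by
    apply ext_hgen
    intro m r
    simp [mr_zero, mul_smul]
  exact LinearMap.congr_fun this x

theorem mr0_one (x : HChain k A N 0) : mr 0 x (1 : A) = x := by
  have : (mr (k := k) (N := N) 0).flip (1 : A) = LinearMap.id := by
    apply ext_hgen
    intro m r
    simp [mr_zero]
  exact LinearMap.congr_fun this x

theorem W_lam (s : A) : ∀ (n : ℕ) (β : α) (x : HChain k A N n),
    W a b n β (lam n s x) = lam n s (W a b n β x)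
  | 0, β, x => by rw [W_zero, W_zero, lam_mr0]
  | (n + 1), β, x => by
    have : (W (k := k) a b (n + 1) β).comp (lam (n + 1) s) = (lam (n + 1) s).comp (W (N := N) a b (n + 1) β) := by
      apply ext_sn
      intro x t
      simp only [LinearMap.comp_apply, lam_sn, W_sn, map_sum, W_lam s n]
    exact LinearMap.congr_fun this x

noncomputable def K (n : ℕ) : HChain k A N n →ₗ[k] HChain k A N (n + 1) :=
  ∑ β : α, ((sn n).flip (b β)).comp (W a b n β)

theorem K_apply {n : ℕ} (x : HChain k A N n) : K a b n x = ∑ β : α, sn n (W a b n β x) (b β) := by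
  simp [K, LinearMap.sum_apply]

noncomputable def H : ∀ n : ℕ, HChain k A N n →ₗ[k] HChain k A N (n + 1)
  | 0 => K a b 0
  | (n + 1) => K a b (n + 1) - elim ((sn (n + 1)).comp (H n))

theorem H_sn {n : ℕ} (x : HChain k A N n) (r : A) :
    H a b (n + 1) (sn n x r) = K a b (n + 1) (sn n x r) - sn (n + 1) (H a b n x) r := by
  simp [H]

theorem K_lam (s : A) (n : ℕ) (x : HChain k A N n) :
    K a b n (lam n s x) = lam (n + 1) s (K a b n x) := by
  simp only [K_apply, map_sum, W_lam, lam_sn]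

theorem H_lam (s : A) : ∀ (n : ℕ) (x : HChain k A N n),
    H a b n (lam n s x) = lam (n + 1) s (H a b n x)
  | 0, x => K_lam a b s 0 x
  | (n + 1), x => by
    have : (H (k := k) a b (n + 1)).comp (lam (n + 1) s) = (lam (n + 2) s).comp (H (N := N) a b (n + 1)) := by
      apply ext_sn
      intro x t
      simp only [LinearMap.comp_apply, lam_sn, H_sn, map_sub, H_lam s n]
      rw [← K_lam, lam_sn]
    exact LinearMap.congr_fun this x

noncomputable def Tg (n : ℕ) : HChain k A N n →ₗ[k] HChain k A N n :=
  ∑ β : α, (lam n (b β)).comp (W a b n β)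

theorem D0_K (n : ℕ) (x : HChain k A N n) : D0 n (K a b n x) = Tg a b n x := by
  simp [K_apply, Tg, LinearMap.sum_apply, D0_sn]

theorem D0_H (n : ℕ) (x : HChain k A N (n + 1)) :
    D0 (n + 1) (H a b (n + 1) x) + H a b n (D0 n x) = Tg a b (n + 1) x := by
  have : (D0 (n + 1)).comp (H (k := k) (N := N) a b (n + 1)) + (H a b n).comp (D0 n) = Tg a b (n + 1) := by
    apply ext_sn
    intro x t
    simp only [LinearMap.comp_apply, LinearMap.add_apply, H_sn, map_sub, D0_sn, D0_K, H_lam]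
    abel
  exact LinearMap.congr_fun this x

variable (hab : ∑ β : α, a β * b β = 1)
include hab

theorem collapse (r s t : A) : ∑ γ : α, r * (a γ * b γ) * s * t = r * s * t := by
  rw [← Finset.sum_mul, ← Finset.sum_mul, ← Finset.mul_sum, hab, mul_one]

theorem W_mr : ∀ (n : ℕ) (β : α) (x : HChain k A N n) (r : A),
    ∑ γ : α, mr n (W a b n γ x) (b γ * r * a β) = W a b n β (mr n x r)
  | 0, β, x, r => by
    simp only [W_zero, mr_mr0]
    rw [← map_sum]
    congr 1
    have := collapse a b hab 1 r (a β)
    simpa [mul_assoc] using this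
  | (n + 1), β, x, r => by
    have : ∑ γ : α, ((mr (n + 1)).flip (b γ * r * a β)).comp (W (k := k) (N := N) a b (n + 1) γ) 
        = (W a b (n + 1) β).comp ((mr (n + 1)).flip r) := by
      apply ext_sn
      intro x t
      simp only [LinearMap.comp_apply, LinearMap.sum_apply, W_sn, map_sum, LinearMap.flip_apply, mr_sn]
      rw [Finset.sum_comm]
      refine Finset.sum_congr rfl fun δ _ => ?_
      rw [← map_sum]
      congr 1
      have := collapse a b hab (b δ * t) r (a β)
      simpa [mul_assoc] using this
    have := LinearMap.congr_fun this x
    simpa [LinearMap.sum_apply] using this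

theorem bp_W : ∀ (n : ℕ) (β : α) (x : HChain k A N (n + 1)),
    bp n (W a b (n + 1) β x) = W a b n β (bp n x)
  | 0, β, x => by
    have : (bp 0).comp (W (k := k) (N := N) a b 1 β) = (W a b 0 β).comp (bp 0) := by
      apply ext_sn
      intro x t
      simp only [LinearMap.comp_apply, W_sn, map_sum, bp_zero, map_neg, ← W_mr a b hab,
        Finset.sum_neg_distrib]
    exact LinearMap.congr_fun this x
  | (n + 1), β, x => by
    have : (bp (n + 1)).comp (W (k := k) (N := N) a b (n + 2) β) = (W a b (n + 1) β).comp (bp (n + 1)) := by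
      apply ext_sn
      intro x t
      simp only [LinearMap.comp_apply, W_sn, map_sum, bp_succ, map_neg, map_sub, ← W_mr a b hab,
        Finset.sum_neg_distrib, Finset.sum_sub_distrib, bp_W n]
    exact LinearMap.congr_fun this x

theorem bp_K0 (x : HChain k A N 0) : bp 0 (K a b 0 x) = - x := by
  simp only [K_apply, map_sum, bp_zero, W_zero, mr_mr0, Finset.sum_neg_distrib]
  rw [← map_sum, hab, mr0_one]

theorem bp_K (n : ℕ) (x : HChain k A N n) (r : A) :
    bp (n + 1) (K a b (n + 1) (sn n x r)) = - mr (n + 1) (K a b n x) r - K a b n (bp n (sn n x r)) := by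
  simp only [K_apply, map_sum, bp_succ, bp_W a b hab, Finset.sum_sub_distrib, Finset.sum_neg_distrib]
  simp only [W_sn, map_sum, LinearMap.sum_apply, mr_sn]
  congr 2
  rw [Finset.sum_comm]
  refine Finset.sum_congr rfl fun δ _ => ?_
  rw [← map_sum]
  congr 1
  have := collapse a b hab (b δ * r) 1 1
  simpa [mul_assoc] using this

omit hab in
theorem L_mr : ∀ (n : ℕ) (x : HChain k A N n) (r : A),
    mr (n + 1) (H a b n x) r - mr (n + 1) (K a b n x) r = H a b n (mr n x r) - K a b n (mr n x r)
  | 0, x, r => by simp [H]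
  | (n + 1), x, r => by
    have : ((mr (n + 2)).flip r).comp (H (k := k) (N := N) a b (n + 1) - K a b (n + 1)) = 
        (H a b (n + 1) - K a b (n + 1)).comp ((mr (n + 1)).flip r) := by
      apply ext_sn
      intro x t
      simp [H_sn, mr_sn]
    have := LinearMap.congr_fun this x
    simpa using this

theorem bp_H : ∀ (n : ℕ) (x : HChain k A N (n + 1)),
    bp (n + 1) (H a b (n + 1) x) + H a b n (bp n x) = - x
  | 0, x => by
    have : (bp 1).comp (H (k := k) (N := N) a b 1) + (H a b 0).comp (bp 0) = - LinearMap.id := by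
      apply ext_sn
      intro x t
      have h1 := L_mr (k := k) a b 0 x t
      have h2 := bp_K0 (k := k) a b hab x
      have e1 := H_sn (k := k) a b x t
      have e2 := bp_K a b hab 0 x t
      have e3 := bp_succ (K a b 0 x) t
      have e4 : H (k := k) (N := N) a b 0 = K a b 0 := rfl
      rw [e4] at e1
      rw [h2, map_neg, LinearMap.neg_apply] at e3
      rw [bp_zero, map_neg] at e2
      rw [LinearMap.add_apply, LinearMap.comp_apply, LinearMap.comp_apply, e4, bp_zero, map_neg]
      refine (congrArg (fun y => bp 1 y + -K a b 0 (mr 0 x t)) e1).trans ?_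
      simp only [map_sub]
      refine (congrArg₂ (fun y z => y - z + -K a b 0 (mr 0 x t)) e2 e3).trans ?_
      simp only [LinearMap.neg_apply, LinearMap.id_apply]
      abel
    exact LinearMap.congr_fun this x
  | (n + 1), x => by
    have : (bp (n + 2)).comp (H (k := k) (N := N) a b (n + 2)) + (H a b (n + 1)).comp (bp (n + 1)) = - LinearMap.id := by
      apply ext_sn
      intro x t
      have h1 := L_mr (k := k) a b (n + 1) x t
      have h2 := eq_sub_of_add_eq (bp_H n x)
      simp only [LinearMap.comp_apply, LinearMap.add_apply, LinearMap.neg_apply, LinearMap.id_apply,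
        H_sn, map_sub, bp_K a b hab, bp_succ, map_neg, h2, LinearMap.sub_apply]
      rw [sub_eq_sub_iff_add_eq_add] at h1
      have h3 := eq_sub_of_add_eq h1
      rw [h3]
      abel
    exact LinearMap.congr_fun this x

theorem homotopy (bd : ∀ n, HChain k A N (n + 1) →ₗ[k] HChain k A N n)
    (hb : ∀ (n : ℕ) (m : N) (r : Fin (n + 1) → A),
      bd n (hgen k m r) =
        hgen k (r (Fin.last n) • m) (Fin.init r)
          + ∑ j : Fin n, ((-1 : ℤ) ^ (n - j.val)) • hgen k m (mergeAt r j)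
          + ((-1 : ℤ) ^ (n + 1)) • hgen k (op (r 0) • m) (Fin.tail r)) :
    (bd 0).comp (H a b 0) = Tg a b 0 - LinearMap.id ∧
      ∀ n : ℕ, (bd (n + 1)).comp (H a b (n + 1)) + (H a b n).comp (bd n)
          = Tg a b (n + 1) - LinearMap.id := by
  have hbd : ∀ n, bd n = D0 n + bp n := fun n => b_eq (bd n) (hb n)
  constructor
  · refine LinearMap.ext fun x => ?_
    have h1 := D0_K (k := k) a b 0 x
    have h2 := bp_K0 (k := k) a b hab x
    have e4 : H (k := k) (N := N) a b 0 = K a b 0 := rfl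
    rw [LinearMap.comp_apply, hbd, e4, LinearMap.add_apply, h1, h2, LinearMap.sub_apply,
      LinearMap.id_apply, sub_eq_add_neg]
  · intro n
    refine LinearMap.ext fun x => ?_
    have h1 := D0_H (k := k) a b n x
    have h2 := bp_H (k := k) a b hab n x
    simp only [hbd, LinearMap.comp_apply, LinearMap.add_apply, LinearMap.sub_apply, LinearMap.id_apply, map_add]
    rw [← h1, sub_eq_add_neg, ← h2]
    abel

omit hab

theorem W_hgen : ∀ (n : ℕ) (β : α) (m : N) (r : Fin n → A),
    W a b n β (hgen k m r) = ∑ g : Fin n → α,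
      hgen k (op (a ((Fin.snoc g β : Fin (n + 1) → α) 0)) • m)
        (fun l => b (g l) * r l * a ((Fin.snoc g β : Fin (n + 1) → α) l.succ))
  | 0, β, m, r => by
    rw [W_zero, mr_zero]
    simp
    congr 2
    exact Subsingleton.elim _ _
  | (n + 1), β, m, r => by
    obtain ⟨r', t, rfl⟩ : ∃ r' t, r = (Fin.snoc r' t : Fin (n + 1) → A) :=
      ⟨Fin.init r, r (Fin.last _), by simp⟩
    rw [← sn_hgen, W_sn]
    rw [← (Fin.snocEquiv (fun _ : Fin (n + 1) => α)).sum_comp, Fintype.sum_prod_type]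
    refine Finset.sum_congr rfl fun γ _ => ?_
    rw [W_hgen n, map_sum, LinearMap.sum_apply]
    refine Finset.sum_congr rfl fun g _ => ?_
    rw [sn_hgen]
    have h0 : (Fin.snoc (Fin.snoc g γ : Fin (n + 1) → α) β : Fin (n + 2) → α) 0
        = (Fin.snoc g γ : Fin (n + 1) → α) 0 := by
      rw [← Fin.castSucc_zero, Fin.snoc_castSucc]
    have h1 : (Fin.snocEquiv (fun _ : Fin (n + 1) => α)) (γ, g) = (Fin.snoc g γ : Fin (n + 1) → α) := rfl
    rw [h1, h0]
    congr 1
    · funext l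
      refine Fin.lastCases ?_ (fun i => ?_) l
      · simp [Fin.snocEquiv]
      · simp [Fin.snocEquiv, ← Fin.castSucc_succ]

theorem cyc {n : ℕ} (β : α) (g : Fin n → α) (i : Fin (n + 1)) :
    (Fin.cons β g : Fin (n + 1) → α) (i + 1) = (Fin.snoc g β : Fin (n + 1) → α) i := by
  refine Fin.lastCases ?_ (fun i => ?_) i
  · simp
  · simp [Fin.coeSucc_eq_succ]

theorem Tg_hgen (n : ℕ) (m : N) (r : Fin n → A) :
    Tg a b n (hgen k m r) = ∑ f : Fin (n + 1) → α,
      hgen k (b (f 0) • (op (a (f 1)) • m))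
        (fun l => b (f l.succ) * r l * a (f (l.succ + 1))) := by
  rw [← (Fin.consEquiv (fun _ : Fin (n + 1) => α)).sum_comp, Fintype.sum_prod_type]
  simp only [Tg, LinearMap.sum_apply, LinearMap.comp_apply, W_hgen, map_sum, lam_hgen]
  refine Finset.sum_congr rfl fun β _ => Finset.sum_congr rfl fun g _ => ?_
  have h1 : (Fin.cons β g : Fin (n + 1) → α) 1 = (Fin.snoc g β : Fin (n + 1) → α) 0 := by
    rw [← cyc, zero_add]
  simp only [Fin.consEquiv, Equiv.coe_fn_mk, cyc, h1, Fin.cons_zero, Fin.cons_succ]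

end

end HochMor

theorem HochMor.induced_bij {k : Type u} [CommRing k] {T T' : ℕ → Type u} [∀ n, AddCommGroup (T n)]
    [∀ n, Module k (T n)] [∀ n, AddCommGroup (T' n)] [∀ n, Module k (T' n)]
    (D : ∀ n, T (n + 1) →ₗ[k] T n) (hsq : ∀ n, (D n).comp (D (n + 1)) = 0)
    (D' : ∀ n, T' (n + 1) →ₗ[k] T' n) (hsq' : ∀ n, (D' n).comp (D' (n + 1)) = 0)
    (f : ∀ n, T n →ₗ[k] T' n)
    (hf : ∀ n, (D' n).comp (f (n + 1)) = (f n).comp (D n))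
    (g : ∀ n, T' n →ₗ[k] T n)
    (hg : ∀ n, (D n).comp (g (n + 1)) = (g n).comp (D' n))
    (h : ∀ n, T n →ₗ[k] T (n + 1))
    (h0 : (D 0).comp (h 0) = (g 0).comp (f 0) - LinearMap.id)
    (h1 : ∀ n, (D (n + 1)).comp (h (n + 1)) + (h n).comp (D n)
      = (g (n + 1)).comp (f (n + 1)) - LinearMap.id)
    (h' : ∀ n, T' n →ₗ[k] T' (n + 1))
    (h0' : (D' 0).comp (h' 0) = (f 0).comp (g 0) - LinearMap.id)
    (h1' : ∀ n, (D' (n + 1)).comp (h' (n + 1)) + (h' n).comp (D' n)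
      = (f (n + 1)).comp (g (n + 1)) - LinearMap.id) (n : ℕ) :
    Function.Bijective (inducedMap D hsq D' hsq' f hf n) := by
  have hf' := fun n x => LinearMap.congr_fun (hf n) x
  have hg' := fun n x => LinearMap.congr_fun (hg n) x
  simp only [LinearMap.comp_apply] at hf' hg'
  cases n with
  | zero =>
    have e := fun x => LinearMap.congr_fun h0 x
    have e' := fun x => LinearMap.congr_fun h0' x
    simp only [LinearMap.comp_apply, LinearMap.sub_apply, LinearMap.id_apply] at e e'
    constructor
    · refine (injective_iff_map_eq_zero (inducedMap D hsq D' hsq' f hf 0)).2 ?_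
      intro x hx
      obtain ⟨x, rfl⟩ := Submodule.Quotient.mk_surjective (LinearMap.range (D 0)) x
      have hx2 : (Submodule.Quotient.mk (f 0 x) : T' 0 ⧸ LinearMap.range (D' 0)) = 0 := hx
      rw [Submodule.Quotient.mk_eq_zero] at hx2
      obtain ⟨y, hy⟩ := hx2
      refine (Submodule.Quotient.mk_eq_zero (LinearMap.range (D 0))).2 ?_
      refine ⟨g 1 y - h 0 x, ?_⟩
      rw [map_sub, hg', hy, e]
      abel
    · intro y
      obtain ⟨y, rfl⟩ := Submodule.Quotient.mk_surjective (LinearMap.range (D' 0)) y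
      refine ⟨(Submodule.Quotient.mk (g 0 y) : T 0 ⧸ LinearMap.range (D 0)), ?_⟩
      refine (Submodule.Quotient.eq (LinearMap.range (D' 0))
        (x := f 0 (g 0 y)) (y := y)).2 ⟨h' 0 y, e' y⟩
  | succ n =>
    have e := fun x => LinearMap.congr_fun (h1 n) x
    have e' := fun x => LinearMap.congr_fun (h1' n) x
    simp only [LinearMap.comp_apply, LinearMap.add_apply, LinearMap.sub_apply,
      LinearMap.id_apply] at e e'
    constructor
    · refine (injective_iff_map_eq_zero (inducedMap D hsq D' hsq' f hf (n + 1))).2 ?_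
      intro x hx
      obtain ⟨⟨x, hxk⟩, rfl⟩ := Submodule.Quotient.mk_surjective _ x
      have hx2 := (Submodule.Quotient.mk_eq_zero _).1 hx
      obtain ⟨y, hy⟩ := hx2
      have hy : D' (n + 1) y = f (n + 1) x := congrArg Subtype.val hy
      refine (Submodule.Quotient.mk_eq_zero _).2 ?_
      refine ⟨g (n + 2) y - h (n + 1) x, Subtype.ext ?_⟩
      change D (n + 1) (g (n + 2) y - h (n + 1) x) = x
      have e1 := e x
      rw [LinearMap.mem_ker.1 hxk, map_zero, add_zero] at e1
      rw [map_sub, hg', hy, e1]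
      abel
    · intro y
      obtain ⟨⟨y, hyk⟩, rfl⟩ := Submodule.Quotient.mk_surjective _ y
      have hk : g (n + 1) y ∈ LinearMap.ker (D n) := by
        rw [LinearMap.mem_ker, hg', LinearMap.mem_ker.1 hyk, map_zero]
      refine ⟨Submodule.Quotient.mk ⟨g (n + 1) y, hk⟩, ?_⟩
      refine (Submodule.Quotient.eq _).2 ⟨h' (n + 1) y, Subtype.ext ?_⟩
      have e1 := e' y
      rw [LinearMap.mem_ker.1 hyk, map_zero, add_zero] at e1
      exact e1

/-- Let `(R, S, P, Q, φ, ψ)` be a Morita context over `k` and let `M` be an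
`(R,R)`-bimodule with symmetric `k`-action.  Then the chain maps
`θ_• : C_•(R, M) → C_•(S, M̃)` and `γ_• : C_•(S, M̃) → C_•(R, M)` are mutually inverse up to
chain homotopy; in particular, for every `n ≥ 0` the map induced by `θ` on homology is a
`k`-module isomorphism `H_n(R, M) ≅ H_n(S, P ⊗_R M ⊗_R Q)` (Morita invariance of Hochschild
homology). -/
theorem morita_invariance_hochschild_homology
    (k R S P Q M Mt : Type u) [CommRing k] [Ring R] [Ring S] [Algebra k R] [Algebra k S]
    [AddCommGroup P] [Module k P] [Module S P] [Module Rᵐᵒᵖ P]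
    [SMulCommClass S Rᵐᵒᵖ P] [IsScalarTower k S P] [IsScalarTower k Rᵐᵒᵖ P]
    [AddCommGroup Q] [Module k Q] [Module R Q] [Module Sᵐᵒᵖ Q]
    [SMulCommClass R Sᵐᵒᵖ Q] [IsScalarTower k R Q] [IsScalarTower k Sᵐᵒᵖ Q]
    [AddCommGroup M] [Module k M] [Module R M] [Module Rᵐᵒᵖ M]
    [SMulCommClass R Rᵐᵒᵖ M] [IsScalarTower k R M] [IsScalarTower k Rᵐᵒᵖ M]
    [AddCommGroup Mt] [Module k Mt] [Module S Mt] [Module Sᵐᵒᵖ Mt]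
    [SMulCommClass S Sᵐᵒᵖ Mt] [IsScalarTower k S Mt] [IsScalarTower k Sᵐᵒᵖ Mt]
    -- the Morita context and the fixed finite families with `Σⱼ φ(p'ⱼ ⊗ q'ⱼ) = 1_S`
    -- and `Σᵢ ψ(qᵢ ⊗ pᵢ) = 1_R`
    (ctx : MoritaContext k R S P Q)
    (ι κ : Type u) [Fintype ι] [Fintype κ]
    (pI : ι → P) (qI : ι → Q) (pJ : κ → P) (qJ : κ → Q)
    (hI : ∑ i : ι, ctx.ψ (qI i) (pI i) = 1)
    (hJ : ∑ j : κ, ctx.φ (pJ j) (qJ j) = 1)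
    -- `Mt` plays the role of `M̃ = P ⊗_R M ⊗_R Q`, with `emb p m q` the class of
    -- `p ⊗ m ⊗ q`; it is an `(S,S)`-bimodule spanned by these classes, the `S`-actions
    -- being `s·(p ⊗ m ⊗ q)·s' = (s·p) ⊗ m ⊗ (q·s')`, and the tensor products are
    -- balanced over `R`
    (emb : P →ₗ[k] M →ₗ[k] Q →ₗ[k] Mt)
    (hemb_bal₁ : ∀ (r : R) (p : P) (m : M) (q : Q), emb (op r • p) m q = emb p (r • m) q)
    (hemb_bal₂ : ∀ (r : R) (p : P) (m : M) (q : Q), emb p (op r • m) q = emb p m (r • q))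
    (hemb_left : ∀ (s : S) (p : P) (m : M) (q : Q), emb (s • p) m q = s • emb p m q)
    (hemb_right : ∀ (s : S) (p : P) (m : M) (q : Q), emb p m (op s • q) = op s • emb p m q)
    (hemb_span : Submodule.span k {x : Mt | ∃ (p : P) (m : M) (q : Q), emb p m q = x} = ⊤)
    -- the Hochschild boundaries of `C_•(R, M)` and `C_•(S, M̃)`
    (bR : ∀ n, HChain k R M (n + 1) →ₗ[k] HChain k R M n)
    (hbR : ∀ (n : ℕ) (m : M) (r : Fin (n + 1) → R),
      bR n (hgen k m r) =
        hgen k (r (Fin.last n) • m) (Fin.init r)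
          + ∑ j : Fin n, ((-1 : ℤ) ^ (n - j.val)) • hgen k m (mergeAt r j)
          + ((-1 : ℤ) ^ (n + 1)) • hgen k (op (r 0) • m) (Fin.tail r))
    (bS : ∀ n, HChain k S Mt (n + 1) →ₗ[k] HChain k S Mt n)
    (hbS : ∀ (n : ℕ) (m : Mt) (s : Fin (n + 1) → S),
      bS n (hgen k m s) =
        hgen k (s (Fin.last n) • m) (Fin.init s)
          + ∑ j : Fin n, ((-1 : ℤ) ^ (n - j.val)) • hgen k m (mergeAt s j)
          + ((-1 : ℤ) ^ (n + 1)) • hgen k (op (s 0) • m) (Fin.tail s))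
    -- the chain map `θ_•`
    (θ : ∀ n, HChain k R M n →ₗ[k] HChain k S Mt n)
    (hθ : ∀ (n : ℕ) (m : M) (r : Fin n → R),
      θ n (hgen k m r) =
        ∑ f : Fin (n + 1) → ι,
          hgen k (emb (pI (f 0)) m (qI (f 1)))
            (fun l : Fin n => ctx.φ (pI (f l.succ)) (r l • qI (f (l.succ + 1)))))
    -- the chain map `γ_•`
    (γ : ∀ n, HChain k S Mt n →ₗ[k] HChain k R M n)
    (hγ : ∀ (n : ℕ) (p : P) (m : M) (q : Q) (s : Fin n → S),
      γ n (hgen k (emb p m q) s) =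
        ∑ g : Fin (n + 1) → κ,
          hgen k (ctx.ψ (qJ (g 0)) p • (op (ctx.ψ q (pJ (g 1))) • m))
            (fun l : Fin n => ctx.ψ (qJ (g l.succ)) (s l • pJ (g (l.succ + 1)))))
    -- squares of the boundaries vanish, and `θ_•`, `γ_•` are chain maps
    (hbR_sq : ∀ n, (bR n).comp (bR (n + 1)) = 0)
    (hbS_sq : ∀ n, (bS n).comp (bS (n + 1)) = 0)
    (hθ_chain : ∀ n, (bS n).comp (θ (n + 1)) = (θ n).comp (bR n))
    (hγ_chain : ∀ n, (bR n).comp (γ (n + 1)) = (γ n).comp (bS n))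
 :
    (∃ h : ∀ n, HChain k R M n →ₗ[k] HChain k R M (n + 1),
        (bR 0).comp (h 0) = (γ 0).comp (θ 0) - LinearMap.id ∧
        ∀ n : ℕ, (bR (n + 1)).comp (h (n + 1)) + (h n).comp (bR n)
          = (γ (n + 1)).comp (θ (n + 1)) - LinearMap.id) ∧
    (∃ ht : ∀ n, HChain k S Mt n →ₗ[k] HChain k S Mt (n + 1),
        (bS 0).comp (ht 0) = (θ 0).comp (γ 0) - LinearMap.id ∧
        ∀ n : ℕ, (bS (n + 1)).comp (ht (n + 1)) + (ht n).comp (bS n)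
          = (θ (n + 1)).comp (γ (n + 1)) - LinearMap.id) ∧
    (∀ n : ℕ, Function.Bijective (inducedMap bR hbR_sq bS hbS_sq θ hθ_chain n)) := by
  have hA : ∑ x : ι × κ, ctx.ψ (qI x.1) (pJ x.2) * ctx.ψ (qJ x.2) (pI x.1) = 1 := by
    rw [← hI, Fintype.sum_prod_type]
    refine Finset.sum_congr rfl fun i _ => ?_
    simp only [← ctx.ψ_right, ← ctx.assoc_φψ]
    rw [← map_sum, ← Finset.sum_smul, hJ, one_smul]
  have hB : ∑ x : ι × κ, ctx.φ (pJ x.2) (qI x.1) * ctx.φ (pI x.1) (qJ x.2) = 1 := by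
    rw [← hJ, Fintype.sum_prod_type_right]
    refine Finset.sum_congr rfl fun j _ => ?_
    simp only [← ctx.φ_left, ctx.assoc_φψ]
    rw [← LinearMap.sum_apply, ← map_sum, ← Finset.sum_smul, ← Finset.op_sum, hI, op_one, one_smul]
  have hγθ : ∀ n, (γ n).comp (θ n) = HochMor.Tg (k := k) (N := M)
      (fun x : ι × κ => ctx.ψ (qI x.1) (pJ x.2)) (fun x : ι × κ => ctx.ψ (qJ x.2) (pI x.1)) n := by
    intro n
    apply HochMor.ext_hgen
    intro m r
    rw [HochMor.Tg_hgen, LinearMap.comp_apply, hθ, map_sum]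
    simp only [hγ]
    rw [← (Equiv.arrowProdEquivProdArrow (Fin (n + 1)) (fun _ => ι) (fun _ => κ)).symm.sum_comp,
      Fintype.sum_prod_type]
    refine Finset.sum_congr rfl fun f _ => Finset.sum_congr rfl fun g _ => ?_
    simp only [Equiv.arrowProdEquivProdArrow, Equiv.coe_fn_symm_mk, ctx.assoc_φψ, ctx.ψ_right,
      ctx.ψ_left, mul_assoc]
  have hθγ : ∀ n, (θ n).comp (γ n) = HochMor.Tg (k := k) (N := Mt)
      (fun x : ι × κ => ctx.φ (pJ x.2) (qI x.1)) (fun x : ι × κ => ctx.φ (pI x.1) (qJ x.2)) n := by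
    intro n
    apply HochMor.ext_hgen
    intro m s
    have key : ((θ n).comp (γ n)).comp ((TensorProduct.mk k Mt _).flip (PiTensorProduct.tprod k s))
      = (HochMor.Tg (k := k) (N := Mt)
      (fun x : ι × κ => ctx.φ (pJ x.2) (qI x.1)) (fun x : ι × κ => ctx.φ (pI x.1) (qJ x.2)) n).comp
        ((TensorProduct.mk k Mt _).flip (PiTensorProduct.tprod k s)) := by
      refine LinearMap.ext_on hemb_span ?_
      rintro _ ⟨p, m, q, rfl⟩
      change θ n (γ n (hgen k (emb p m q) s)) = HochMor.Tg _ _ n (hgen k (emb p m q) s)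
      rw [HochMor.Tg_hgen, hγ, map_sum]
      simp only [hθ]
      rw [← (Equiv.arrowProdEquivProdArrow (Fin (n + 1)) (fun _ => ι) (fun _ => κ)).symm.sum_comp,
        Fintype.sum_prod_type_right]
      refine Finset.sum_congr rfl fun f _ => Finset.sum_congr rfl fun g _ => ?_
      simp only [Equiv.arrowProdEquivProdArrow, Equiv.coe_fn_symm_mk, ← hemb_bal₁, hemb_bal₂,
        ← ctx.assoc_φψ, ctx.assoc_ψφ, ctx.φ_right, ctx.φ_left, mul_assoc, hemb_left, hemb_right]
    exact LinearMap.congr_fun key m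
  obtain ⟨h0, h1⟩ := HochMor.homotopy (k := k) (N := M) _ _ hA bR hbR
  obtain ⟨h0', h1'⟩ := HochMor.homotopy (k := k) (N := Mt) _ _ hB bS hbS
  simp only [← hγθ] at h0 h1
  simp only [← hθγ] at h0' h1'
  exact ⟨⟨_, h0, h1⟩, ⟨_, h0', h1'⟩,
    HochMor.induced_bij bR hbR_sq bS hbS_sq θ hθ_chain γ hγ_chain _ h0 h1 _ h0' h1'⟩
end

section
/- Let (R,S,P,Q,φ,ψ) be a Morita context over k. Then for every n ≥ 0 there is a k-module isomorphism HC_n(R) ≅ HC_n(S) between the cyclic homologies of R and S (Morita invariance of cyclic homology of associative algebras). -/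
open scoped TensorProduct
open MulOpposite

universe u

section Cyclic

variable (k : Type u) [CommRing k]

/-- The `k`-module `A^{⊗_k (n+1)}` underlying the cyclic module of a `k`-algebra `A`;
it is the module `CC_{p,n}` in any column of Tsygan's cyclic bicomplex. -/
abbrev CycChain (A : Type u) [Ring A] [Algebra k A] (n : ℕ) :=
  PiTensorProduct k (fun _ : Fin (n + 1) => A)

/-- The generator `r₀ ⊗ r₁ ⊗ ⋯ ⊗ rₙ` of `A^{⊗_k (n+1)}`. -/
noncomputable def cgen {A : Type u} [Ring A] [Algebra k A] {n : ℕ}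
    (r : Fin (n + 1) → A) : CycChain k A n :=
  PiTensorProduct.tprod k r

/-- The `i`-th face of the tuple `r = (r₀, …, r_{m+1})`:
`d_0 r = (r_{m+1}·r₀, r₁, …, r_m)`, for `1 ≤ i ≤ m` the face `d_i` multiplies the entries
at the (0-based) positions `m + 1 - i` and `m + 2 - i`, and
`d_{m+1} r = (r₀·r₁, r₂, …, r_{m+1})`. -/
def faceTuple {A : Type u} [Mul A] {m : ℕ} (r : Fin (m + 2) → A) (i : Fin (m + 2)) :
    Fin (m + 1) → A :=
  fun l =>
    if i.val = 0 then (if l.val = 0 then r (Fin.last (m + 1)) * r 0 else r l.castSucc)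
    else if l.val < (m + 1) - i.val then r l.castSucc
    else if l.val = (m + 1) - i.val then r l.castSucc * r l.succ
    else r l.succ

/-- The degree-`n` part `⊕_{p+q=n} CC_{p,q} = ⊕_{p=0}^{n} A^{⊗(n-p+1)}` of the total complex
of Tsygan's cyclic bicomplex of the `k`-algebra `A`. -/
abbrev TotC (A : Type u) [Ring A] [Algebra k A] (n : ℕ) :=
  DirectSum (Fin (n + 1)) (fun p => CycChain k A (n - p.val))

end Cyclic


namespace Mor
set_option linter.unusedSectionVars false
open PiTensorProduct

variable {k : Type u} [CommRing k] {A B C : Type u} [Ring A] [Algebra k A] [Ring B] [Algebra k B]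
  [Ring C] [Algebra k C]

def ef {A : Type u} [Mul A] {m : ℕ} (l : ℕ) (r : Fin (m + 2) → A) : Fin (m + 1) → A := fun j =>
  if m + 1 ≤ l then (if j.val = 0 then r (Fin.last _) * r 0 else r j.castSucc)
  else if j.val < l then r j.castSucc
  else if j.val = l then r j.castSucc * r j.succ else r j.succ

lemma faceTuple_eq {A : Type u} [Mul A] {m : ℕ} (r : Fin (m + 2) → A) (i : Fin (m + 2)) :
    faceTuple r i = ef (m + 1 - i.val) r := by
  funext j
  simp only [faceTuple, ef]
  have := i.isLt
  by_cases h : i.val = 0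
  · simp [h]
  · have h2 : ¬ (m + 1 ≤ m + 1 - i.val) := by omega
    simp [h, h2]

lemma ef_update {m : ℕ} (l : ℕ) (r : Fin (m + 2) → A) (j : Fin (m + 2)) :
    ∃ (p : Fin (m + 1)) (f : A →ₗ[k] A), ∀ a,
      ef l (Function.update r j a) = Function.update (ef l r) p (f a) := by
  have hj := j.isLt
  by_cases hl : m + 1 ≤ l
  · by_cases h1 : j.val = m + 1
    · refine ⟨0, LinearMap.mulRight k (r 0), fun a => ?_⟩
      funext x
      have hx := x.isLt
      simp only [ef, hl, if_true, Function.update_apply, Fin.ext_iff, Fin.val_last, Fin.val_zero,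
        Fin.val_castSucc, LinearMap.mulRight_apply]
      split_ifs <;> first | rfl | omega
    · by_cases h0 : j.val = 0
      · refine ⟨0, LinearMap.mulLeft k (r (Fin.last _)), fun a => ?_⟩
        funext x
        have hx := x.isLt
        simp only [ef, hl, if_true, Function.update_apply, Fin.ext_iff, Fin.val_last, Fin.val_zero,
          Fin.val_castSucc, LinearMap.mulLeft_apply]
        split_ifs <;> first | rfl | omega
      · refine ⟨⟨j.val, by omega⟩, LinearMap.id, fun a => ?_⟩
        funext x
        have hx := x.isLt
        simp only [ef, hl, if_true, Function.update_apply, Fin.ext_iff, Fin.val_last, Fin.val_zero,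
          Fin.val_castSucc, LinearMap.id_apply]
        split_ifs <;> first | rfl | omega
  · by_cases h1 : j.val = l
    · refine ⟨⟨l, by omega⟩, LinearMap.mulRight k (r ⟨l + 1, by omega⟩), fun a => ?_⟩
      funext x
      have hx := x.isLt
      simp only [ef, hl, if_false, Function.update_apply, Fin.ext_iff,
          Fin.val_castSucc, Fin.val_succ, LinearMap.mulRight_apply]
      split_ifs <;> first | rfl | omega | (congr 2; simp [Fin.ext_iff]; omega)
    · by_cases h2 : j.val = l + 1
      · refine ⟨⟨l, by omega⟩, LinearMap.mulLeft k (r ⟨l, by omega⟩), fun a => ?_⟩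
        funext x
        have hx := x.isLt
        simp only [ef, hl, if_false, Function.update_apply, Fin.ext_iff,
          Fin.val_castSucc, Fin.val_succ, LinearMap.mulLeft_apply]
        split_ifs <;> first | rfl | omega | (congr 2; simp [Fin.ext_iff]; omega)
      · refine ⟨⟨if j.val ≤ l then j.val else j.val - 1, by split_ifs <;> omega⟩,
          LinearMap.id, fun a => ?_⟩
        funext x
        have hx := x.isLt
        simp only [ef, hl, if_false, Function.update_apply, Fin.ext_iff,
          Fin.val_castSucc, Fin.val_succ, LinearMap.id_apply]
        split_ifs <;> first | rfl | omega

variable (k) in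
noncomputable def efM {m : ℕ} (l : ℕ) :
    MultilinearMap k (fun _ : Fin (m + 2) => A) (CycChain k A m) where
  toFun r := PiTensorProduct.tprod k (ef l r)
  map_update_add' := by
    intro inst r j a b
    obtain rfl : inst = instDecidableEqFin _ := Subsingleton.elim _ _
    obtain ⟨p, f, hf⟩ := ef_update (k := k) l r j
    simp only [hf, map_add]
    exact (PiTensorProduct.tprod k).map_update_add _ _ _ _
  map_update_smul' := by
    intro inst r j a b
    obtain rfl : inst = instDecidableEqFin _ := Subsingleton.elim _ _
    obtain ⟨p, f, hf⟩ := ef_update (k := k) l r j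
    simp only [hf, map_smul]
    exact (PiTensorProduct.tprod k).map_update_smul _ _ _ _

noncomputable def E {m : ℕ} (l : ℕ) : CycChain k A (m + 1) →ₗ[k] CycChain k A m := lift (efM k l)

@[simp] lemma E_tprod {m : ℕ} (l : ℕ) (r : Fin (m + 2) → A) :
    E (k := k) l (PiTensorProduct.tprod k r) = PiTensorProduct.tprod k (ef l r) := by
  simp [E, efM]

noncomputable def Rot {n : ℕ} (i : Fin (n + 1)) : CycChain k A n →ₗ[k] CycChain k A n :=
  (reindex k (fun _ => A) (Equiv.addRight i).symm).toLinearMap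

@[simp] lemma Rot_tprod {n : ℕ} (i : Fin (n + 1)) (r : Fin (n + 1) → A) :
    Rot (k := k) i (PiTensorProduct.tprod k r) = PiTensorProduct.tprod k (fun l => r (l + i)) := by
  simp [Rot, reindex_tprod]

noncomputable def ins {n : ℕ} (j : ℕ) : CycChain k A n →ₗ[k] CycChain k A (n + 1) :=
  lift ((PiTensorProduct.tprod k).curryMid (M := fun _ => A) (Fin.ofNat (n + 2) j) (1 : A))

@[simp] lemma ins_tprod {n : ℕ} (j : ℕ) (r : Fin (n + 1) → A) :
    ins (k := k) j (PiTensorProduct.tprod k r) = PiTensorProduct.tprod k ((Fin.ofNat (n + 2) j).insertNth (α := fun _ => A) 1 r) := by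
  rw [ins, lift.tprod]; rfl

variable {Λ : Type}

noncomputable def G (m : Λ → Λ → A →ₗ[k] B) {n : ℕ} (c : Fin (n + 1) → Finset Λ) :
    CycChain k A n →ₗ[k] CycChain k B n :=
  ∑ x ∈ Fintype.piFinset c, PiTensorProduct.map (fun l => m (x l) (x (l + 1)))

lemma G_tprod (m : Λ → Λ → A →ₗ[k] B) {n : ℕ} (c : Fin (n + 1) → Finset Λ) (r : Fin (n + 1) → A) :
    G m c (PiTensorProduct.tprod k r) =
      ∑ x ∈ Fintype.piFinset c, PiTensorProduct.tprod k (fun l => m (x l) (x (l + 1)) (r l)) := by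
  simp [G, LinearMap.sum_apply]

def Good (m : Λ → Λ → A →ₗ[k] B) (s : Finset Λ) : Prop :=
  ∀ y z a b, ∑ x ∈ s, m y x a * m x z b = m y z (a * b)


lemma Rot_G (m : Λ → Λ → A →ₗ[k] B) {n : ℕ} (c : Fin (n + 1) → Finset Λ) (i : Fin (n + 1)) (t) :
    Rot i (G m c t) = G m (fun l => c (l + i)) (Rot i t) := by
  induction t using PiTensorProduct.induction_on with
  | add x y hx hy => simp only [map_add, hx, hy]
  | smul_tprod a r =>
    simp only [map_smul, Rot_tprod, G_tprod, map_sum]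
    congr 1
    refine Finset.sum_nbij' (fun x l => x (l + i)) (fun x l => x (l - i)) ?_ ?_ ?_ ?_ ?_
    · intro x hx; simp only [Fintype.mem_piFinset] at *; intro l; exact hx _
    · intro x hx; simp only [Fintype.mem_piFinset] at *; intro l; simpa using hx (l - i)
    · intro x hx; simp
    · intro x hx; simp
    · intro x hx
      simp [add_right_comm]

lemma ef_wrap {A : Type u} [Mul A] {m : ℕ} (r : Fin (m + 2) → A) :
    ef (m + 1) (fun l => r (l + 1)) = ef 0 r := by
  funext x
  simp only [ef, le_refl, if_true]
  by_cases h : x.val = 0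
  · have : x = 0 := by ext; simpa using h
    subst this; simp
  · simp [h]

end Mor

namespace Mor
open PiTensorProduct
set_option linter.unusedSectionVars false
variable {k : Type u} [CommRing k] {A B C : Type u} [Ring A] [Algebra k A] [Ring B] [Algebra k B]
  [Ring C] [Algebra k C] {Λ : Type}

/-- value of an inserted tuple -/
lemma insertNth_val {α : Type*} {n : ℕ} (p : Fin (n + 1)) (z : α) (y : Fin n → α) (x : Fin (n + 1)) :
    p.insertNth (α := fun _ => α) z y x =
      if h : x.val < p.val then y ⟨x.val, by omega⟩ else
      if h' : x.val = p.val then z else y ⟨x.val - 1, by omega⟩ := by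
  rcases Fin.eq_self_or_eq_succAbove p x with rfl | ⟨j, rfl⟩
  · simp
  · rw [Fin.insertNth_apply_succAbove]
    by_cases h : j.castSucc < p
    · have h2 := h
      rw [Fin.lt_def] at h2
      simp only [Fin.val_castSucc] at h2
      simp [Fin.succAbove_of_castSucc_lt _ _ h, h2]
    · have h2 := h
      rw [Fin.lt_def] at h2
      simp only [Fin.val_castSucc] at h2
      have h3 : ¬ (j.val + 1 < p.val) := by omega
      have h4 : ¬ (j.val + 1 = p.val) := by omega
      simp [Fin.succAbove_of_le_castSucc _ _ (not_lt.1 h), h3, h4]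

lemma val_add_one' {n : ℕ} (x : Fin (n + 1)) :
    (x + 1).val = if x.val = n then 0 else x.val + 1 := by
  rw [Fin.val_add_one]; simp [Fin.ext_iff]

lemma ef_G_tuple (m : Λ → Λ → A →ₗ[k] B) {n : ℕ} (l : ℕ) (hl : l ≤ n) (r : Fin (n + 2) → A)
    (y : Fin (n + 1) → Λ) (z : Λ) :
    ef l (fun j => m ((⟨l + 1, by omega⟩ : Fin (n + 2)).insertNth (α := fun _ => Λ) z y j)
        ((⟨l + 1, by omega⟩ : Fin (n + 2)).insertNth (α := fun _ => Λ) z y (j + 1)) (r j)) =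
      Function.update (fun j => m (y j) (y (j + 1)) (ef l r j)) (⟨l, by omega⟩ : Fin (n + 1))
        (m (y ⟨l, by omega⟩) z (r ⟨l, by omega⟩) *
          m z (y (⟨l, by omega⟩ + 1)) (r ⟨l + 1, by omega⟩)) := by
  funext j
  have hj := j.isLt
  have hl' : ¬ (n + 1 ≤ l) := by omega
  have key : ∀ a b : Fin (n + 1), a.val = b.val → y a = y b := fun a b h => by
    rw [Fin.ext h]
  have keyr : ∀ a b : Fin (n + 2), a.val = b.val → r a = r b := fun a b h => by
    rw [Fin.ext h]
  rcases lt_trichotomy j.val l with h | h | h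
  · have h1 : j ≠ ⟨l, by omega⟩ := by simp [Fin.ext_iff]; omega
    rw [Function.update_of_ne h1]
    simp only [ef, hl', if_false, h, if_true, insertNth_val, val_add_one', Fin.val_castSucc]
    have h2 : ¬ (j.val = n + 1) := by omega
    simp only [h2, if_false]
    rw [dif_pos (by omega), dif_pos (by omega), key ⟨j.val + 1, _⟩ (j + 1)]
    exact ((val_add_one' j).trans (if_neg (by omega))).symm
  · obtain ⟨j, hj'⟩ := j
    obtain rfl : j = l := h
    rw [Function.update_self]
    simp only [ef, hl', if_false, lt_irrefl, if_true, insertNth_val, val_add_one', Fin.val_castSucc,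
      Fin.val_succ]
    congr 1
    · rw [dif_pos (Nat.lt_succ_self _)]
      have h5 : ¬ (j = n + 1) := by omega
      simp only [h5, if_false]
      rw [dif_neg (lt_irrefl _), dif_pos trivial]
      rfl
    · rw [dif_neg not_false, dif_pos trivial]
      by_cases hn : j = n
      · subst hn
        simp only [if_true]
        rw [dif_pos (by omega), key ⟨0, _⟩ (⟨j, by omega⟩ + 1)]
        · rfl
        · exact ((val_add_one' (⟨j, hj'⟩ : Fin (j + 1))).trans (if_pos rfl)).symm
      · have : ¬ (j + 1 = n + 1) := by omega
        simp only [this, if_false]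
        rw [dif_neg (by omega), dif_neg (by omega), key ⟨j + 1 + 1 - 1, _⟩ (⟨j, by omega⟩ + 1)]
        · rfl
        · exact ((val_add_one' (⟨j, hj'⟩ : Fin (n + 1))).trans (if_neg hn)).symm
  · have h1 : j ≠ ⟨l, by omega⟩ := by simp [Fin.ext_iff]; omega
    rw [Function.update_of_ne h1]
    have h2 : ¬ (j.val < l) := by omega
    have h3 : ¬ (j.val = l) := by omega
    simp only [ef, hl', if_false, h2, h3, insertNth_val, val_add_one', Fin.val_succ]
    rw [dif_neg (by omega), dif_neg (by omega), key ⟨j.val + 1 - 1, _⟩ j (by simp)]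
    by_cases hn : j.val = n
    · have : j.val + 1 = n + 1 := by omega
      simp only [this, if_true]
      rw [dif_pos (by omega), key ⟨0, _⟩ (j + 1)]
      exact ((val_add_one' j).trans (if_pos hn)).symm
    · have : ¬ (j.val + 1 = n + 1) := by omega
      simp only [this, if_false]
      rw [dif_neg (by omega), dif_neg (by omega), key ⟨j.val + 1 + 1 - 1, _⟩ (j + 1)]
      exact ((val_add_one' j).trans (if_neg hn)).symm

lemma ef_at {n : ℕ} (l : ℕ) (hl : l ≤ n) (r : Fin (n + 2) → A) :
    ef l r ⟨l, by omega⟩ = r ⟨l, by omega⟩ * r ⟨l + 1, by omega⟩ := by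
  have hl' : ¬ (n + 1 ≤ l) := by omega
  simp [ef, hl']

lemma E_G (m : Λ → Λ → A →ₗ[k] B) {n : ℕ} (c : Fin (n + 2) → Finset Λ) (l : ℕ) (hl : l ≤ n)
    (hc : Good m (c ⟨l + 1, by omega⟩)) (t) :
    E l (G m c t) = G m (fun j => c ((⟨l + 1, by omega⟩ : Fin (n + 2)).succAbove j)) (E l t) := by
  induction t using PiTensorProduct.induction_on with
  | add x y hx hy => simp only [map_add, hx, hy]
  | smul_tprod a r =>
    simp only [map_smul, E_tprod, G_tprod, map_sum]
    congr 1
    set p : Fin (n + 2) := ⟨l + 1, by omega⟩ with hp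
    have h1 : ∑ x ∈ Fintype.piFinset c,
          PiTensorProduct.tprod k (ef l (fun j => m (x j) (x (j + 1)) (r j))) =
        ∑ yz ∈ Fintype.piFinset (fun j => c (p.succAbove j)) ×ˢ c p,
          PiTensorProduct.tprod k (ef l (fun j => m (p.insertNth (α := fun _ => Λ) yz.2 yz.1 j)
            (p.insertNth (α := fun _ => Λ) yz.2 yz.1 (j + 1)) (r j))) := by
      refine Finset.sum_nbij' (fun x => (fun j => x (p.succAbove j), x p))
        (fun yz => p.insertNth (α := fun _ => Λ) yz.2 yz.1) ?_ ?_ ?_ ?_ ?_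
      · intro x hx
        simp only [Fintype.mem_piFinset, Finset.mem_product] at *
        exact ⟨fun j => hx _, hx _⟩
      · intro x hx
        simp only [Fintype.mem_piFinset, Finset.mem_product] at *
        intro j
        rcases Fin.eq_self_or_eq_succAbove p j with rfl | ⟨j, rfl⟩
        · simpa using hx.2
        · simpa using hx.1 j
      · intro x hx
        exact Fin.insertNth_self_removeNth p x
      · intro x hx
        simp
      · intro x hx
        have : p.insertNth (α := fun _ => Λ) (x p) (fun j => x (p.succAbove j)) = x :=
          Fin.insertNth_self_removeNth p x
        simp only [this]
    rw [h1, Finset.sum_product]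
    refine Finset.sum_congr rfl fun y hy => ?_
    simp only [hp]
    simp only [ef_G_tuple m l hl r]
    rw [← MultilinearMap.map_update_sum]
    rw [hc]
    congr 1
    rw [Function.update_eq_self_iff, ef_at l hl]

lemma E_wrap {n : ℕ} (t : CycChain k A (n + 1)) : E (n + 1) (Rot 1 t) = E 0 t := by
  induction t using PiTensorProduct.induction_on with
  | add x y hx hy => simp only [map_add, hx, hy]
  | smul_tprod a r => simp only [map_smul, E_tprod, Rot_tprod, ef_wrap]

lemma Rot_surj {n : ℕ} (i : Fin (n + 1)) (t : CycChain k A n) : ∃ t', Rot i t' = t := by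
  exact (reindex k (fun _ => A) (Equiv.addRight i).symm).surjective t

lemma E_G_wrap (m : Λ → Λ → A →ₗ[k] B) {n : ℕ} (c : Fin (n + 2) → Finset Λ)
    (hc : Good m (c 0)) (t) :
    E (n + 1) (G m c t) =
      G m (fun j => c (if j.val = 0 then Fin.last _ else j.castSucc)) (E (n + 1) t) := by
  obtain ⟨t, rfl⟩ := Rot_surj 1 t
  have h := Rot_G m (fun l => c (l - 1)) 1 t
  simp only [add_sub_cancel_right] at h
  rw [← h, E_wrap, E_wrap, E_G _ _ 0 (by omega)]
  · congr 2
    funext j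
    congr 1
    rcases Fin.eq_zero_or_eq_succ j with rfl | ⟨j', rfl⟩
    · simp [Fin.ext_iff, Fin.succAbove]
    · simp [Fin.ext_iff, Fin.succAbove]
      rw [← Fin.coeSucc_eq_succ, add_sub_cancel_right]
      simp
  · have : (⟨0 + 1, by omega⟩ : Fin (n + 2)) = 1 := rfl
    rw [this, sub_self]; exact hc

end Mor

namespace Mor
open PiTensorProduct
set_option linter.unusedSectionVars false
variable {k : Type u} [CommRing k] {A B C : Type u} [Ring A] [Algebra k A] [Ring B] [Algebra k B]
  [Ring C] [Algebra k C] {Λ : Type}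

lemma exists_nat_ext {α : Type*} [Inhabited α] {n : ℕ} (r : Fin n → α) :
    ∃ r' : ℕ → α, r = fun a => r' a.val :=
  ⟨fun a => if h : a < n then r ⟨a, h⟩ else default, by funext a; simp⟩

lemma ins_val {n : ℕ} (r' : ℕ → A) (j : ℕ) (hj : j ≤ n + 1) (x : Fin (n + 2)) :
    (Fin.ofNat (n + 2) j).insertNth (α := fun _ => A) 1 (fun a : Fin (n + 1) => r' a.val) x =
      if x.val < j then r' x.val else if x.val = j then 1 else r' (x.val - 1) := by
  have h : (Fin.ofNat (n + 2) j).val = j := Nat.mod_eq_of_lt (by omega)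
  rw [insertNth_val]
  simp only [h]
  split_ifs <;> rfl

lemma ef_ins_eq {n : ℕ} (r : Fin (n + 1) → A) (j : ℕ) (hj : j ≤ n) (i : ℕ) (hi : i = j ∨ i = j + 1) :
    ef i ((Fin.ofNat (n + 2) (j + 1)).insertNth (α := fun _ => A) 1 r) = r := by
  have : Inhabited A := ⟨0⟩
  obtain ⟨r', rfl⟩ := exists_nat_ext r
  funext x
  have hx := x.isLt
  simp only [ef, ins_val r' (j + 1) (by omega : j + 1 ≤ n + 1), Fin.val_castSucc, Fin.val_succ,
    Fin.val_last, Fin.val_zero]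
  have key : ∀ a b : ℕ, a = b → r' a = r' b := fun a b h => by rw [h]
  split_ifs <;> first | omega | (try simp only [one_mul, mul_one]) <;> first | done | (apply key; omega)

lemma ef_ins_lt {n : ℕ} (r : Fin (n + 2) → A) (j : ℕ) (hj : j ≤ n + 1) (i : ℕ) (hi : i < j) :
    ef i ((Fin.ofNat (n + 3) (j + 1)).insertNth (α := fun _ => A) 1 r) =
      (Fin.ofNat (n + 2) j).insertNth (α := fun _ => A) 1 (ef i r) := by
  have : Inhabited A := ⟨0⟩
  obtain ⟨r', rfl⟩ := exists_nat_ext r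
  have key : ∀ a b : ℕ, a = b → r' a = r' b := fun a b h => by rw [h]
  have h1 : (ef i fun a : Fin (n + 2) => r' a.val) = fun a : Fin (n + 1) =>
    (fun x : ℕ => if x < i then r' x else if x = i then r' x * r' (x + 1) else r' (x + 1)) a.val := by
    funext x
    have hx := x.isLt
    simp only [ef, Fin.val_castSucc, Fin.val_succ, Fin.val_last, Fin.val_zero]
    split_ifs <;> first | omega | rfl
  rw [h1]
  funext x
  have hx := x.isLt
  rw [ins_val (fun x : ℕ => if x < i then r' x else if x = i then r' x * r' (x + 1) else r' (x + 1))
    j (by omega)]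
  simp only [ef, ins_val r' (j + 1) (by omega : j + 1 ≤ n + 1 + 1), Fin.val_castSucc, Fin.val_succ,
    Fin.val_last, Fin.val_zero]
  split_ifs <;> first | omega | rfl | (apply key; omega)

lemma ef_ins_gt {n : ℕ} (r : Fin (n + 2) → A) (j : ℕ) (i : ℕ) (hi : j < i) (hn : i ≤ n + 1) :
    ef (i + 1) ((Fin.ofNat (n + 3) (j + 1)).insertNth (α := fun _ => A) 1 r) =
      (Fin.ofNat (n + 2) (j + 1)).insertNth (α := fun _ => A) 1 (ef i r) := by
  have : Inhabited A := ⟨0⟩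
  obtain ⟨r', rfl⟩ := exists_nat_ext r
  have key : ∀ a b : ℕ, a = b → r' a = r' b := fun a b h => by rw [h]
  have key2 : ∀ a b c d : ℕ, a = b → c = d → r' a * r' c = r' b * r' d := fun a b c d h h' => by
    rw [h, h']
  rcases Nat.lt_or_ge i (n + 1) with hi' | hi'
  · have h1 : (ef i fun a : Fin (n + 2) => r' a.val) = fun a : Fin (n + 1) =>
      (fun x : ℕ => if x < i then r' x else if x = i then r' x * r' (x + 1) else r' (x + 1)) a.val := by
      funext x
      have hx := x.isLt
      simp only [ef, Fin.val_castSucc, Fin.val_succ, Fin.val_last, Fin.val_zero]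
      split_ifs <;> first | omega | rfl
    rw [h1]
    funext x
    have hx := x.isLt
    rw [ins_val (fun x : ℕ => if x < i then r' x else
      if x = i then r' x * r' (x + 1) else r' (x + 1)) (j + 1) (by omega)]
    have h2 : ¬ (n + 1 + 1 ≤ i + 1) := by omega
    simp only [ef, ins_val r' (j + 1) (by omega : j + 1 ≤ n + 1 + 1), Fin.val_castSucc, Fin.val_succ,
      Fin.val_last, Fin.val_zero, h2, if_false]
    rcases Nat.lt_or_ge x.val (j + 1) with h3 | h3
    · rw [if_pos (by omega), if_pos (by omega), if_pos (by omega), if_pos (by omega)]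
    · rcases Nat.eq_or_lt_of_le h3 with h4 | h4
      · rw [if_pos (by omega), if_neg (by omega), if_pos (by omega), if_neg (by omega),
          if_pos (by omega)]
      · rw [if_neg (show ¬ (x.val < j + 1) by omega), if_neg (show ¬ (x.val = j + 1) by omega),
          if_neg (show ¬ (x.val < j + 1) by omega), if_neg (show ¬ (x.val = j + 1) by omega),
          if_neg (show ¬ (x.val + 1 < j + 1) by omega),
          if_neg (show ¬ (x.val + 1 = j + 1) by omega)]
        split_ifs <;> first | omega | rfl | (apply key; omega) | (apply key2 <;> omega)
  · have h1 : (ef i fun a : Fin (n + 2) => r' a.val) = fun a : Fin (n + 1) =>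
      (fun x : ℕ => if x = 0 then r' (n + 1) * r' 0 else r' x) a.val := by
      funext x
      simp only [ef, Fin.val_castSucc, Fin.val_last, Fin.val_zero, hi', if_true]
    rw [h1]
    funext x
    have hx := x.isLt
    rw [ins_val (fun x : ℕ => if x = 0 then r' (n + 1) * r' 0 else r' x) (j + 1) (by omega)]
    have h2 : n + 1 + 1 ≤ i + 1 := by omega
    simp only [ef, ins_val r' (j + 1) (by omega : j + 1 ≤ n + 1 + 1), Fin.val_castSucc,
      Fin.val_last, Fin.val_zero, h2, if_true]
    split_ifs <;> first | omega | rfl | (apply key; omega) | (apply key2 <;> omega)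

lemma E_ins_eq {n : ℕ} (t : CycChain k A n) (j : ℕ) (hj : j ≤ n) (i : ℕ) (hi : i = j ∨ i = j + 1) :
    E i (ins (j + 1) t) = t := by
  induction t using PiTensorProduct.induction_on with
  | add x y hx hy => simp only [map_add, hx, hy]
  | smul_tprod a r => simp only [map_smul, E_tprod, ins_tprod, ef_ins_eq r j hj i hi]

lemma E_ins_lt {n : ℕ} (t : CycChain k A (n + 1)) (j : ℕ) (hj : j ≤ n + 1) (i : ℕ) (hi : i < j) :
    E i (ins (j + 1) t) = ins j (E i t) := by
  induction t using PiTensorProduct.induction_on with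
  | add x y hx hy => simp only [map_add, hx, hy]
  | smul_tprod a r => simp only [map_smul, E_tprod, ins_tprod, ef_ins_lt r j hj i hi]

lemma E_ins_gt {n : ℕ} (t : CycChain k A (n + 1)) (j : ℕ) (i : ℕ) (hi : j < i) (hn : i ≤ n + 1) :
    E (i + 1) (ins (j + 1) t) = ins (j + 1) (E i t) := by
  induction t using PiTensorProduct.induction_on with
  | add x y hx hy => simp only [map_add, hx, hy]
  | smul_tprod a r => simp only [map_smul, E_tprod, ins_tprod, ef_ins_gt r j i hi hn]

/-- vertex pattern -/
def pat (T F : Finset Λ) (n j : ℕ) : Fin (n + 1) → Finset Λ := fun l =>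
  if (1 ≤ l.val ∧ l.val ≤ j) ∨ n + 1 ≤ j then T else F

variable (m : Λ → Λ → A →ₗ[k] A) (T F : Finset Λ)

noncomputable def hh {n : ℕ} (j : ℕ) : CycChain k A n →ₗ[k] CycChain k A (n + 1) :=
  G m (pat T F (n + 1) (j + 1)) ∘ₗ ins (j + 1)

lemma Good_pat (hT : Good m T) (hF : Good m F) (n j : ℕ) (l) : Good m (pat T F n j l) := by
  unfold pat; split_ifs <;> assumption

lemma val_succAbove {n : ℕ} (p : Fin (n + 1)) (j : Fin n) :
    (p.succAbove j).val = if j.val < p.val then j.val else j.val + 1 := by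
  simp only [Fin.succAbove, Fin.lt_def, Fin.val_castSucc]; split_ifs <;> rfl

lemma pat_succAbove {n : ℕ} (j i : ℕ) (hi : i ≤ n) (hj : j ≤ n + 1):
    (fun l => pat T F (n + 1) j ((⟨i + 1, by omega⟩ : Fin (n + 2)).succAbove l)) =
      pat T F n (if i + 1 ≤ j then j - 1 else j) := by
  funext l
  have hl := l.isLt
  simp only [pat, val_succAbove]
  congr 1
  apply propext
  split_ifs <;> omega

lemma pat_wrap {n : ℕ} (j : ℕ) (hj : j ≤ n + 1) :
    (fun l : Fin (n + 1) => pat T F (n + 1) j (if l.val = 0 then Fin.last _ else l.castSucc)) =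
      pat T F n j := by
  funext l
  have hl := l.isLt
  simp only [pat]
  congr 1
  apply propext
  split_ifs <;> simp only [Fin.val_last, Fin.val_castSucc] <;> omega

variable {m T F}

lemma E_Gpat (hT : Good m T) (hF : Good m F) {n : ℕ} (j i : ℕ) (hi : i ≤ n + 1) (hj : j ≤ n + 1)
    (t : CycChain k A (n + 1)) :
    E i (G m (pat T F (n + 1) j) t) =
      G m (pat T F n (if i + 1 ≤ j then j - 1 else j)) (E i t) := by
  rcases Nat.lt_or_ge n i with h | h
  · obtain rfl : i = n + 1 := by omega
    rw [E_G_wrap _ _ (Good_pat m T F hT hF _ _ _), pat_wrap T F j hj, if_neg (by omega)]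
  · rw [E_G _ _ i h (Good_pat m T F hT hF _ _ _), pat_succAbove T F j i h hj]

lemma E_hh_lt (hT : Good m T) (hF : Good m F) {n : ℕ} (j i : ℕ) (hi : i ≤ j) (hj : j ≤ n)
    (t : CycChain k A (n + 1)) :
    E i (hh m T F (j + 1) t) = hh m T F j (E i t) := by
  simp only [hh, LinearMap.comp_apply]
  rw [E_Gpat hT hF _ _ (by omega) (by omega), E_ins_lt _ _ (by omega) _ (by omega), if_pos (by omega)]
  rfl

lemma E_hh_gt (hT : Good m T) (hF : Good m F) {n : ℕ} (j i : ℕ) (hi : j < i) (hj : i ≤ n + 1)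
    (t : CycChain k A (n + 1)) :
    E (i + 1) (hh m T F j t) = hh m T F j (E i t) := by
  simp only [hh, LinearMap.comp_apply]
  rw [E_Gpat hT hF _ _ (by omega) (by omega), E_ins_gt _ _ _ (by omega) (by omega),
    if_neg (by omega)]

lemma E_hh_eq (hT : Good m T) (hF : Good m F) {n : ℕ} (j : ℕ) (hj : j ≤ n)
    (t : CycChain k A n) :
    E j (hh m T F j t) = G m (pat T F n j) t := by
  simp only [hh, LinearMap.comp_apply]
  rw [E_Gpat hT hF _ _ (by omega) (by omega), E_ins_eq _ _ (by omega) _ (by omega),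
    if_pos (by omega)]
  rfl

lemma E_hh_eq' (hT : Good m T) (hF : Good m F) {n : ℕ} (j : ℕ) (hj : j ≤ n)
    (t : CycChain k A n) :
    E (j + 1) (hh m T F j t) = G m (pat T F n (j + 1)) t := by
  simp only [hh, LinearMap.comp_apply]
  rw [E_Gpat hT hF _ _ (by omega) (by omega), E_ins_eq _ _ (by omega) _ (by omega),
    if_neg (by omega)]

/-- alternating sum combinatorics -/
lemma alt_sum {k : Type*} [CommRing k] {M : Type*} [AddCommGroup M] [Module k M] (n : ℕ) (a e : ℕ → ℕ → M) (g : ℕ → M)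
    (hlt : ∀ i j, i ≤ j → j + 1 ≤ n → a i (j + 1) = e i j)
    (hgt : ∀ i j, j < i → i ≤ n → a (i + 1) j = e i j)
    (heq : ∀ j, j ≤ n → a j j = g j) (heq' : ∀ j, j ≤ n → a (j + 1) j = g (j + 1)) :
    ∑ i ∈ Finset.range (n + 2), ∑ j ∈ Finset.range (n + 1), (-1 : k) ^ (i + j) • a i j +
      ∑ i ∈ Finset.range (n + 1), ∑ j ∈ Finset.range n, (-1 : k) ^ (i + j) • e i j
      = g 0 - g (n + 1) := by
  classical
  have hdiag : ∑ j ∈ Finset.range (n + 1), (a j j - a (j + 1) j) = g 0 - g (n + 1) := by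
    rw [← Finset.sum_range_sub' g (n + 1)]
    refine Finset.sum_congr rfl fun j hj => ?_
    rw [Finset.mem_range] at hj
    rw [heq j (by omega), heq' j (by omega)]
  rw [← hdiag]
  -- for each column j, split rows
  have hcol : ∀ j ∈ Finset.range (n + 1), ∑ i ∈ Finset.range (n + 2), (-1 : k) ^ (i + j) • a i j =
      (a j j - a (j + 1) j) + (∑ i ∈ Finset.range j, (-1 : k) ^ (i + j) • a i j
        + ∑ i ∈ Finset.Ico (j + 1) (n + 1), (-1 : k) ^ (i + 1 + j) • a (i + 1) j) := by
    intro j hj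
    rw [Finset.mem_range] at hj
    rw [← Finset.sum_range_add_sum_Ico _ (show j + 2 ≤ n + 2 by omega), Finset.sum_range_succ,
      Finset.sum_range_succ, Finset.sum_Ico_add' (fun i => (-1 : k) ^ (i + j) • a i j)]
    have h1 : (-1 : k) ^ (j + j) = 1 := by rw [← two_mul]; simp
    have h2 : (-1 : k) ^ (j + 1 + j) = -1 := by
      rw [show j + 1 + j = 2 * j + 1 by ring, pow_succ]; simp
    rw [h1, h2, one_smul, neg_smul, one_smul]
    abel
  rw [Finset.sum_comm, Finset.sum_congr rfl hcol, Finset.sum_add_distrib, add_assoc,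
    add_eq_left, Finset.sum_add_distrib]
  have h3 : ∑ j ∈ Finset.range (n + 1), ∑ i ∈ Finset.range j, (-1 : k) ^ (i + j) • a i j =
      ∑ j ∈ Finset.range n, ∑ i ∈ Finset.range (j + 1), -((-1 : k) ^ (i + j) • e i j) := by
    rw [Finset.sum_range_succ']
    simp only [Finset.range_zero, Finset.sum_empty, add_zero]
    refine Finset.sum_congr rfl fun j hj => Finset.sum_congr rfl fun i hi => ?_
    rw [Finset.mem_range] at hi hj
    rw [hlt i j (by omega) (by omega), ← add_assoc, pow_succ]
    simp
  have h4 : ∑ j ∈ Finset.range (n + 1), ∑ i ∈ Finset.Ico (j + 1) (n + 1),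
        (-1 : k) ^ (i + 1 + j) • a (i + 1) j =
      ∑ j ∈ Finset.range n, ∑ i ∈ Finset.Ico (j + 1) (n + 1), -((-1 : k) ^ (i + j) • e i j) := by
    rw [Finset.sum_range_succ]
    simp only [Finset.Ico_self, Finset.sum_empty, add_zero]
    refine Finset.sum_congr rfl fun j hj => Finset.sum_congr rfl fun i hi => ?_
    rw [Finset.mem_Ico] at hi
    rw [hgt i j (by omega) (by omega), add_right_comm, pow_succ]
    simp
  rw [h3, h4, ← Finset.sum_add_distrib, Finset.sum_comm (s := Finset.range (n + 1)),
    ← Finset.sum_add_distrib]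
  refine Finset.sum_eq_zero fun j hj => ?_
  rw [Finset.mem_range] at hj
  rw [Finset.sum_range_add_sum_Ico _ (by omega), Finset.sum_neg_distrib, neg_add_cancel]

end Mor

namespace Mor
open PiTensorProduct
set_option linter.unusedSectionVars false
variable {k : Type u} [CommRing k] {A B C : Type u} [Ring A] [Algebra k A] [Ring B] [Algebra k B]
  [Ring C] [Algebra k C] {Λ : Type}

noncomputable def bb (n : ℕ) : CycChain k A (n + 1) →ₗ[k] CycChain k A n :=
  ∑ i ∈ Finset.range (n + 2), (-1 : k) ^ i • E (n + 1 - i)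

noncomputable def bb' (n : ℕ) : CycChain k A (n + 1) →ₗ[k] CycChain k A n :=
  ∑ i ∈ Finset.range (n + 1), (-1 : k) ^ i • E (n + 1 - i)

lemma bb_apply (n : ℕ) (x : CycChain k A (n + 1)) :
    bb n x = ∑ i ∈ Finset.range (n + 2), (-1 : k) ^ i • E (n + 1 - i) x := by
  simp [bb, LinearMap.sum_apply]

lemma bb'_apply (n : ℕ) (x : CycChain k A (n + 1)) :
    bb' n x = ∑ i ∈ Finset.range (n + 1), (-1 : k) ^ i • E (n + 1 - i) x := by
  simp [bb', LinearMap.sum_apply]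

lemma bb_eq (n : ℕ) (x : CycChain k A (n + 1)) :
    bb n x = (-1 : k) ^ (n + 1) • ∑ i ∈ Finset.range (n + 2), (-1 : k) ^ i • E i x := by
  rw [bb_apply, ← Finset.sum_range_reflect, Finset.smul_sum]
  refine Finset.sum_congr rfl fun i hi => ?_
  rw [Finset.mem_range] at hi
  have h1 : n + 1 - (n + 2 - 1 - i) = i := by omega
  rw [h1, smul_smul]
  congr 1
  have h2 : n + 1 = (n + 2 - 1 - i) + i := by omega
  rw [h2, pow_add, mul_assoc, ← pow_add, ← two_mul]
  simp

noncomputable def hs (m : Λ → Λ → A →ₗ[k] A) (T F : Finset Λ) (n : ℕ) :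
    CycChain k A n →ₗ[k] CycChain k A (n + 1) :=
  (-1 : k) ^ (n + 1) • ∑ j ∈ Finset.range (n + 1), (-1 : k) ^ j • hh m T F j

lemma hs_apply (m : Λ → Λ → A →ₗ[k] A) (T F : Finset Λ) (n : ℕ) (x : CycChain k A n) :
    hs m T F n x = (-1 : k) ^ (n + 1) • ∑ j ∈ Finset.range (n + 1), (-1 : k) ^ j • hh m T F j x := by
  simp [hs, LinearMap.sum_apply]

lemma sgn_sq {k : Type*} [CommRing k] (n : ℕ) : (-1 : k) ^ n * (-1) ^ n = 1 := by
  rw [← pow_add, ← two_mul]; simp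

section
variable {m : Λ → Λ → A →ₗ[k] A} {T F : Finset Λ}

lemma bb_hs (n : ℕ) (x : CycChain k A n) :
    bb n (hs m T F n x) = ∑ i ∈ Finset.range (n + 2), ∑ j ∈ Finset.range (n + 1),
      (-1 : k) ^ (i + j) • E i (hh m T F j x) := by
  rw [bb_eq, hs_apply]
  simp only [map_smul, map_sum, Finset.smul_sum, smul_smul]
  refine Finset.sum_congr rfl fun i _ => Finset.sum_congr rfl fun j _ => ?_
  congr 1
  rw [pow_add _ i j]
  linear_combination ((-1 : k) ^ i * (-1) ^ j) * sgn_sq (k := k) (n + 1)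

lemma hs_bb (n : ℕ) (x : CycChain k A (n + 1)) :
    hs m T F n (bb n x) = ∑ i ∈ Finset.range (n + 2), ∑ j ∈ Finset.range (n + 1),
      (-1 : k) ^ (i + j) • hh m T F j (E i x) := by
  rw [bb_eq, hs_apply, Finset.sum_comm]
  simp only [map_smul, map_sum, Finset.smul_sum, smul_smul]
  refine Finset.sum_congr rfl fun i _ => Finset.sum_congr rfl fun j _ => ?_
  congr 1
  rw [pow_add _ j i]
  linear_combination ((-1 : k) ^ i * (-1) ^ j) * sgn_sq (k := k) (n + 1)

lemma pat_zero (n : ℕ) : pat T F n 0 = fun _ => F := by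
  funext l; simp only [pat]; rw [if_neg (by omega)]

lemma pat_top (n : ℕ) : pat T F n (n + 1) = fun _ => T := by
  funext l; simp [pat]

lemma htpy_even_zero (hT : Good m T) (hF : Good m F) (x : CycChain k A 0) :
    bb 0 (hs m T F 0 x) = G m (fun _ => F) x - G m (fun _ => T) x := by
  have := alt_sum (k := k) 0 (fun i j => E i (hh m T F j x)) (fun _ _ => 0)
    (fun j => G m (pat T F 0 j) x) (by intros; omega) (by intros; omega)
    (fun j hj => E_hh_eq hT hF j hj x) (fun j hj => E_hh_eq' hT hF j hj x)
  rw [bb_hs]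
  simp only [pat_zero, pat_top] at this
  rw [← this]; simp

lemma htpy_even_succ (hT : Good m T) (hF : Good m F) (n : ℕ) (x : CycChain k A (n + 1)) :
    bb (n + 1) (hs m T F (n + 1) x) + hs m T F n (bb n x) =
      G m (fun _ => F) x - G m (fun _ => T) x := by
  have := alt_sum (k := k) (n + 1) (fun i j => E i (hh m T F j x)) (fun i j => hh m T F j (E i x))
    (fun j => G m (pat T F (n + 1) j) x)
    (fun i j hi hj => E_hh_lt hT hF j i hi (by omega) x)
    (fun i j hi hj => E_hh_gt hT hF j i hi hj x)
    (fun j hj => E_hh_eq hT hF j hj x) (fun j hj => E_hh_eq' hT hF j hj x)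
  rw [bb_hs, hs_bb, this, pat_zero, pat_top]

end

lemma bb'_ins_zero (x : CycChain k A 0) : bb' 0 (ins 1 x) = x := by
  rw [bb'_apply]
  simpa using E_ins_eq x 0 le_rfl 1 (by omega)

lemma bb'_ins_succ (n : ℕ) (x : CycChain k A (n + 1)) :
    bb' (n + 1) (ins 1 x) = (-1 : k) ^ (n + 1) • x + ins 1 (bb' n x) := by
  rw [bb'_apply, bb'_apply, Finset.sum_range_succ]
  refine (add_comm _ _).trans ?_
  congr 1
  · have h : n + 1 + 1 - (n + 1) = 1 := by omega
    rw [h, E_ins_eq x 0 (by omega) 1 (by omega)]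
  · rw [map_sum]
    refine Finset.sum_congr rfl fun i hi => ?_
    rw [Finset.mem_range] at hi
    have h : n + 1 + 1 - i = (n + 1 - i) + 1 := by omega
    rw [map_smul, h, E_ins_gt x 0 _ (by omega) (by omega)]

noncomputable def ss (n : ℕ) : CycChain k A n →ₗ[k] CycChain k A (n + 1) :=
  (-1 : k) ^ (n + 1) • ins 1

lemma ss_apply (n : ℕ) (x : CycChain k A n) : ss n x = (-1 : k) ^ (n + 1) • ins 1 x := rfl

lemma htpy_odd_zero (x : CycChain k A 0) : -bb' 0 (ss 0 x) = x := by
  rw [ss_apply, map_smul, bb'_ins_zero]; simp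

lemma htpy_odd_succ (n : ℕ) (x : CycChain k A (n + 1)) :
    -bb' (n + 1) (ss (n + 1) x) + ss n (-bb' n x) = x := by
  rw [ss_apply, map_smul, bb'_ins_succ, ss_apply, map_neg, smul_add, smul_smul, smul_neg,
    pow_succ _ (n + 1), mul_assoc, mul_comm (-1 : k), ← mul_assoc, sgn_sq]
  simp

/-- trace map -/
noncomputable def Th (m : Λ → Λ → A →ₗ[k] B) (T : Finset Λ) (n : ℕ) :
    CycChain k A n →ₗ[k] CycChain k B n := G m (fun _ => T)

lemma E_Th (m : Λ → Λ → A →ₗ[k] B) (T : Finset Λ) (hT : Good m T) (n i : ℕ) (hi : i ≤ n + 1)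
    (x : CycChain k A (n + 1)) : E i (Th m T (n + 1) x) = Th m T n (E i x) := by
  rcases Nat.lt_or_ge n i with h | h
  · obtain rfl : i = n + 1 := by omega
    exact E_G_wrap m _ hT x
  · exact E_G m (fun _ => T) i h hT x

/-- vertical differential in column `p` -/
noncomputable def V (p n : ℕ) : CycChain k A (n + 1) →ₗ[k] CycChain k A n :=
  if Even p then bb n else -bb' n

/-- horizontal differential out of column `p` -/
noncomputable def W (p n : ℕ) : CycChain k A n →ₗ[k] CycChain k A n :=
  if Even p then ∑ i : Fin (n + 1), ((-1 : k) ^ (n * i.val)) • Rot i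
  else LinearMap.id - ((-1 : k) ^ n) • Rot 1

lemma V_Th (m : Λ → Λ → A →ₗ[k] B) (T : Finset Λ) (hT : Good m T) (p n : ℕ)
    (x : CycChain k A (n + 1)) : V p n (Th m T (n + 1) x) = Th m T n (V p n x) := by
  unfold V
  split_ifs
  · rw [bb_apply, bb_apply, map_sum]
    refine Finset.sum_congr rfl fun i hi => ?_
    rw [E_Th m T hT n _ (by omega), map_smul]
  · rw [LinearMap.neg_apply, LinearMap.neg_apply, map_neg, bb'_apply, bb'_apply, map_sum]
    congr 1
    refine Finset.sum_congr rfl fun i hi => ?_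
    rw [E_Th m T hT n _ (by omega), map_smul]

lemma W_Th (m : Λ → Λ → A →ₗ[k] B) (T : Finset Λ) (p n : ℕ)
    (x : CycChain k A n) : W p n (Th m T n x) = Th m T n (W p n x) := by
  have h : ∀ i x, Rot i (Th m T n x) = Th m T n (Rot i x) := fun i x => Rot_G m _ i x
  unfold W
  split_ifs
  · simp only [LinearMap.sum_apply, LinearMap.smul_apply, h, map_sum, map_smul]
  · simp only [LinearMap.sub_apply, LinearMap.id_apply, LinearMap.smul_apply, h, map_sub, map_smul]

/-- vertical homotopies -/
noncomputable def K (m : Λ → Λ → A →ₗ[k] A) (T F : Finset Λ) (p n : ℕ) :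
    CycChain k A n →ₗ[k] CycChain k A (n + 1) :=
  if Even p then hs m T F n else ss n ∘ₗ (LinearMap.id - Th m T n)

section
variable {m : Λ → Λ → A →ₗ[k] A} {T F : Finset Λ}

lemma K_zero (hT : Good m T) (hF : Good m F) (hid : ∀ n x, Th m F n x = x) (p : ℕ)
    (x : CycChain k A 0) : V p 0 (K m T F p 0 x) = x - Th m T 0 x := by
  unfold V K
  split_ifs
  · rw [htpy_even_zero hT hF]
    exact congrArg (· - Th m T 0 x) (hid 0 x)
  · exact htpy_odd_zero _

lemma K_succ (hT : Good m T) (hF : Good m F) (hid : ∀ n x, Th m F n x = x) (p n : ℕ)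
    (x : CycChain k A (n + 1)) :
    V p (n + 1) (K m T F p (n + 1) x) + K m T F p n (V p n x) = x - Th m T (n + 1) x := by
  have hc := V_Th m T hT p n x
  unfold V K at *
  split_ifs at *
  · rw [htpy_even_succ hT hF]
    exact congrArg (· - Th m T (n + 1) x) (hid _ x)
  · have := htpy_odd_succ n (x - Th m T (n + 1) x)
    rw [← this]
    simp only [LinearMap.neg_apply, LinearMap.comp_apply, LinearMap.sub_apply,
      LinearMap.id_apply] at *
    rw [← hc, map_sub (bb' n)]
    congr 2
    abel
end

end Mor

namespace Mor
open PiTensorProduct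
set_option linter.unusedSectionVars false
variable {k : Type u} [CommRing k] {A B C : Type u} [Ring A] [Algebra k A] [Ring B] [Algebra k B]
  [Ring C] [Algebra k C] {Λ : Type}

lemma zsm (n q : ℕ) (x : CycChain k A q) : (-1 : ℤ) ^ n • x = (-1 : k) ^ n • x := by
  have h : ∀ z : ℤ, z • x = (z • (1 : k)) • x := fun z => by
    rw [smul_assoc, one_smul]
  rw [h]
  congr 1
  simp

lemma V_cgen (p q : ℕ) (r : Fin (q + 2) → A) : V (k := k) p q (cgen k r) =
    if Even p then ∑ i : Fin (q + 2), ((-1 : ℤ) ^ i.val) • cgen k (faceTuple r i)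
    else -∑ i : Fin (q + 1), ((-1 : ℤ) ^ i.val) • cgen k (faceTuple r i.castSucc) := by
  unfold V
  split_ifs
  · rw [bb_apply, Finset.sum_range]
    refine Finset.sum_congr rfl fun i _ => ?_
    rw [zsm, faceTuple_eq, cgen, E_tprod]; rfl
  · rw [LinearMap.neg_apply, bb'_apply, Finset.sum_range]
    congr 1
    refine Finset.sum_congr rfl fun i _ => ?_
    rw [zsm, faceTuple_eq, cgen, E_tprod]; rfl

lemma W_cgen (p q : ℕ) (r : Fin (q + 1) → A) : W (k := k) p q (cgen k r) =
    if Even p then ∑ i : Fin (q + 1), ((-1 : ℤ) ^ (q * i.val)) • cgen k (fun l => r (l + i))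
    else cgen k r - ((-1 : ℤ) ^ q) • cgen k (fun l => r (l + 1)) := by
  unfold W
  split_ifs
  · simp only [LinearMap.sum_apply, LinearMap.smul_apply, zsm, cgen, Rot_tprod]
  · simp only [LinearMap.sub_apply, LinearMap.id_apply, LinearMap.smul_apply, zsm, cgen, Rot_tprod]

/-- transport -/
noncomputable def castL {a b : ℕ} (h : a = b) : CycChain k A a →ₗ[k] CycChain k A b :=
  h ▸ LinearMap.id

/-- inclusion of the `(p,q)` component -/
noncomputable def incl (k A : Type u) [CommRing k] [Ring A] [Algebra k A] (n p q : ℕ) (h : p + q = n) : CycChain k A q →ₗ[k] TotC k A n :=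
  DirectSum.lof k (Fin (n + 1)) (fun p' => CycChain k A (n - p'.val)) ⟨p, by omega⟩ ∘ₗ
    castL (show q = n - p by omega)

lemma incl_eq (n p : ℕ) (h : p + (n - p) = n) (x : CycChain k A (n - p)) :
    incl k A n p (n - p) h x = DirectSum.lof k (Fin (n + 1)) (fun p' => CycChain k A (n - p'.val))
      ⟨p, by omega⟩ x := rfl

/-- `D` is the total differential -/
def IsTot (D : ∀ n, TotC k A (n + 1) →ₗ[k] TotC k A n) : Prop :=
  ∀ (n p : ℕ) (hp : p < n + 2) (r : Fin ((n + 1) - p + 1) → A),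
      D n (DirectSum.lof k (Fin (n + 2)) (fun p' => CycChain k A ((n + 1) - p'.val)) ⟨p, hp⟩
          (cgen k r)) =
        (if h : p ≤ n then
          DirectSum.lof k (Fin (n + 1)) (fun p' => CycChain k A (n - p'.val))
            ⟨p, by omega⟩
            (if Even p then
              ∑ i : Fin ((n - p) + 2), ((-1 : ℤ) ^ i.val) •
                cgen k (faceTuple (fun t => r (Fin.cast (by omega) t)) i)
            else
              -∑ i : Fin ((n - p) + 1), ((-1 : ℤ) ^ i.val) •
                cgen k (faceTuple (fun t => r (Fin.cast (by omega) t)) i.castSucc))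
        else 0)
        +
        (if h2 : 1 ≤ p then
          DirectSum.lof k (Fin (n + 1)) (fun p' => CycChain k A (n - p'.val))
            ⟨p - 1, by omega⟩
            (if Even p then
              ∑ i : Fin ((n - (p - 1)) + 1), ((-1 : ℤ) ^ ((n - (p - 1)) * i.val)) •
                cgen (n := n - (p - 1)) k (fun l =>
                  r (Fin.cast (by omega) (l + i)))
            else
              cgen (n := n - (p - 1)) k
                  (fun t => r (Fin.cast (by omega) t))
                - ((-1 : ℤ) ^ (n - (p - 1))) •
                  cgen (n := n - (p - 1)) k (fun l =>
                    r (Fin.cast (by omega) (l + 1))))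
        else 0)

noncomputable def Vt (k A : Type u) [CommRing k] [Ring A] [Algebra k A] (n p : ℕ) : ∀ q, p + q = n + 1 → (CycChain k A q →ₗ[k] TotC k A n)
  | 0, _ => 0
  | q + 1, h => incl k A n p q (by omega) ∘ₗ V p q

noncomputable def Wt (k A : Type u) [CommRing k] [Ring A] [Algebra k A] (n : ℕ) : ∀ p q, p + q = n + 1 → (CycChain k A q →ₗ[k] TotC k A n)
  | 0, _, _ => 0
  | p + 1, q, h => incl k A n p q (by omega) ∘ₗ W (p + 1) q

lemma Vt_eq (n p q q' : ℕ) (e : q = q' + 1) (h : p + q = n + 1) (r : Fin (q + 1) → A) :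
    Vt k A n p q h (cgen k r) =
      incl k A n p q' (by omega) (V p q' (cgen k fun t => r (Fin.cast (by omega) t))) := by
  subst e; rfl

lemma Wt_eq (n p q p' q' : ℕ) (e : p = p' + 1) (e2 : q = q') (h : p + q = n + 1)
    (r : Fin (q + 1) → A) :
    Wt k A n p q h (cgen k r) =
      incl k A n p' q' (by omega) (W p q' (cgen k fun t => r (Fin.cast (by omega) t))) := by
  subst e e2; rfl

lemma D_incl {D : ∀ n, TotC k A (n + 1) →ₗ[k] TotC k A n} (hD : IsTot D) (n p q : ℕ)
    (h : p + q = n + 1) (x : CycChain k A q) :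
    D n (incl k A (n + 1) p q h x) = Vt k A n p q h x + Wt k A n p q h x := by
  induction x using PiTensorProduct.induction_on with
  | add x y hx hy => simp only [map_add, hx, hy]; abel
  | smul_tprod a r =>
    simp only [map_smul, ← smul_add]
    congr 1
    obtain rfl : q = n + 1 - p := by omega
    rw [incl_eq]
    refine (hD n p (by omega) r).trans ?_
    congr 1
    · by_cases hp : p ≤ n
      · rw [dif_pos hp, ← cgen, Vt_eq n p _ (n - p) (by omega), incl_eq, V_cgen]
      · rw [dif_neg hp]
        have hq : ∀ q (e : q = 0) (h : p + q = n + 1) (r : Fin (q + 1) → A),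
          0 = Vt k A n p q h (cgen k r) := by
          intro q e h r; subst e; rfl
        exact hq _ (by omega) _ _
    · by_cases hp : 1 ≤ p
      · rw [dif_pos hp, ← cgen, Wt_eq n p _ (p - 1) (n - (p - 1)) (by omega) (by omega), incl_eq,
          W_cgen]
      · rw [dif_neg hp]
        obtain rfl : p = 0 := by omega
        rfl

lemma tot_ext {M : Type*} [AddCommGroup M] [Module k M] {n : ℕ} {f g : TotC k A n →ₗ[k] M}
    (h : ∀ p q e x, f (incl k A n p q e x) = g (incl k A n p q e x)) : f = g := by
  refine DirectSum.linearMap_ext k fun p => LinearMap.ext fun x => ?_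
  exact h p.val (n - p.val) (by have := p.isLt; omega) x

/-- extension of columnwise maps -/
noncomputable def colMap {M : Type*} [AddCommGroup M] [Module k M] (n : ℕ)
    (f : ∀ p q, p + q = n → (CycChain k A q →ₗ[k] M)) : TotC k A n →ₗ[k] M :=
  DirectSum.toModule k _ _ (fun p => f p.val (n - p.val) (by have := p.isLt; omega))

lemma colMap_incl {M : Type*} [AddCommGroup M] [Module k M] (n : ℕ)
    (f : ∀ p q, p + q = n → (CycChain k A q →ₗ[k] M)) (p q : ℕ) (h : p + q = n)
    (x : CycChain k A q) : colMap n f (incl k A n p q h x) = f p q h x := by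
  obtain rfl : q = n - p := by omega
  rw [incl_eq, colMap, DirectSum.toModule_lof]

noncomputable def Ft (m : Λ → Λ → A →ₗ[k] B) (T : Finset Λ) (n : ℕ) :
    TotC k A n →ₗ[k] TotC k B n :=
  colMap n fun p q h => incl k B n p q h ∘ₗ Th m T q

lemma Ft_incl (m : Λ → Λ → A →ₗ[k] B) (T : Finset Λ) (n p q : ℕ) (h : p + q = n)
    (x : CycChain k A q) : Ft m T n (incl k A n p q h x) = incl k B n p q h (Th m T q x) :=
  colMap_incl n _ p q h x

lemma Ft_chain {D : ∀ n, TotC k A (n + 1) →ₗ[k] TotC k A n} (hD : IsTot D)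
    {D' : ∀ n, TotC k B (n + 1) →ₗ[k] TotC k B n} (hD' : IsTot D')
    (m : Λ → Λ → A →ₗ[k] B) (T : Finset Λ) (hT : Good m T) (n : ℕ) :
    (D' n).comp (Ft m T (n + 1)) = (Ft m T n).comp (D n) := by
  refine tot_ext fun p q e x => ?_
  rw [LinearMap.comp_apply, LinearMap.comp_apply, Ft_incl, D_incl hD, D_incl hD', map_add]
  congr 1
  · cases q with
    | zero => exact (map_zero (Ft m T n)).symm
    | succ q =>
      refine Eq.trans ?_ (Ft_incl m T n p q (by omega) (V p q x)).symm
      rw [← V_Th m T hT]; rfl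
  · cases p with
    | zero => exact (map_zero (Ft m T n)).symm
    | succ p =>
      refine Eq.trans ?_ (Ft_incl m T n p q (by omega) (W (p + 1) q x)).symm
      rw [← W_Th m T]; rfl

/-- total homotopy -/
noncomputable def H (m : Λ → Λ → A →ₗ[k] A) (T F : Finset Λ) (n : ℕ) :
    TotC k A n →ₗ[k] TotC k A (n + 1) :=
  colMap n fun p q h => incl k A (n + 1) p (q + 1) (by omega) ∘ₗ K m T F p q

lemma H_incl (m : Λ → Λ → A →ₗ[k] A) (T F : Finset Λ) (n p q : ℕ) (h : p + q = n)
    (x : CycChain k A q) : H m T F n (incl k A n p q h x) =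
      incl k A (n + 1) p (q + 1) (by omega) (K m T F p q x) :=
  colMap_incl n _ p q h x

/-- column filtration -/
def Fil (k A : Type u) [CommRing k] [Ring A] [Algebra k A] (n p : ℕ) :
    Submodule k (TotC k A n) :=
  Submodule.span k {z | ∃ p' q' h x, p' < p ∧ z = incl k A n p' q' h x}

lemma incl_mem (n p p' q : ℕ) (h : p' + q = n) (hp : p' < p) (x : CycChain k A q) :
    incl k A n p' q h x ∈ Fil k A n p := Submodule.subset_span ⟨p', q, h, x, hp, rfl⟩

lemma Fil_zero (n : ℕ) (z : TotC k A n) (hz : z ∈ Fil k A n 0) : z = 0 := by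
  have : Fil k A n 0 = ⊥ := by
    rw [Fil, Submodule.span_eq_bot]
    rintro _ ⟨p', _, _, _, h, _⟩
    omega
  rw [this] at hz
  simpa using hz

lemma Fil_top (n : ℕ) (z : TotC k A n) : z ∈ Fil k A n (n + 1) := by
  have h : (Fil k A n (n + 1)).mkQ = 0 := by
    refine tot_ext fun p q e x => ?_
    rw [LinearMap.zero_apply, Submodule.mkQ_apply, Submodule.Quotient.mk_eq_zero]
    exact incl_mem _ _ _ _ _ (by omega) _
  have := LinearMap.congr_fun h z
  rwa [LinearMap.zero_apply, Submodule.mkQ_apply, Submodule.Quotient.mk_eq_zero] at this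

lemma Fil_mono (n : ℕ) {p p' : ℕ} (h : p ≤ p') : Fil k A n p ≤ Fil k A n p' := by
  refine Submodule.span_le.2 ?_
  rintro _ ⟨a, b, c, d, e, rfl⟩
  exact incl_mem _ _ _ _ _ (by omega) _

end Mor

namespace Mor
open PiTensorProduct
set_option linter.unusedSectionVars false
variable {k : Type u} [CommRing k] {A B C : Type u} [Ring A] [Algebra k A] [Ring B] [Algebra k B]
  [Ring C] [Algebra k C] {Λ : Type}

lemma H_mem (m : Λ → Λ → A →ₗ[k] A) (T F : Finset Λ) (n p : ℕ) :
    Fil k A n p ≤ (Fil k A (n + 1) p).comap (H m T F n) := by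
  refine Submodule.span_le.2 ?_
  rintro _ ⟨a, b, c, d, e, rfl⟩
  rw [SetLike.mem_coe, Submodule.mem_comap, H_incl]
  exact incl_mem _ _ _ _ _ e _

lemma Wt_mem (n p p' q : ℕ) (h : p' + q = n + 1) (hp : p' ≤ p) (x : CycChain k A q) :
    Wt k A n p' q h x ∈ Fil k A n p := by
  cases p' with
  | zero => exact zero_mem _
  | succ p' => exact incl_mem n p p' q (by omega) hp _

lemma step_zero {D : ∀ n, TotC k A (n + 1) →ₗ[k] TotC k A n} (hD : IsTot D)
    {m : Λ → Λ → A →ₗ[k] A} {T F : Finset Λ} (hT : Good m T) (hF : Good m F)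
    (hid : ∀ n x, Th m F n x = x) (p : ℕ) :
    Fil k A 0 (p + 1) ≤ (Fil k A 0 p).comap
      (LinearMap.id - Ft m T 0 - D 0 ∘ₗ H m T F 0) := by
  refine Submodule.span_le.2 ?_
  rintro _ ⟨p', q, h, x, hp, rfl⟩
  obtain rfl : q = 0 := by omega
  obtain rfl : p' = 0 := by omega
  rw [SetLike.mem_coe, Submodule.mem_comap]
  simp only [LinearMap.sub_apply, LinearMap.id_apply, LinearMap.comp_apply, Ft_incl, H_incl,
    D_incl hD]
  have h1 : Vt k A 0 0 (0 + 1) (by omega) (K m T F 0 0 x) = incl k A 0 0 0 h (V 0 0 (K m T F 0 0 x)) := rfl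
  have h2 : Wt k A 0 0 (0 + 1) (by omega) (K m T F 0 0 x) = 0 := rfl
  rw [h1, h2, K_zero hT hF hid, map_sub, add_zero, sub_self]
  exact zero_mem _

lemma step_succ {D : ∀ n, TotC k A (n + 1) →ₗ[k] TotC k A n} (hD : IsTot D)
    {m : Λ → Λ → A →ₗ[k] A} {T F : Finset Λ} (hT : Good m T) (hF : Good m F)
    (hid : ∀ n x, Th m F n x = x) (n p : ℕ) :
    Fil k A (n + 1) (p + 1) ≤ (Fil k A (n + 1) p).comap
      (LinearMap.id - Ft m T (n + 1) - D (n + 1) ∘ₗ H m T F (n + 1) - H m T F n ∘ₗ D n) := by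
  refine Submodule.span_le.2 ?_
  rintro _ ⟨p', q, h, x, hp, rfl⟩
  rw [SetLike.mem_coe, Submodule.mem_comap]
  simp only [LinearMap.sub_apply, LinearMap.id_apply, LinearMap.comp_apply, Ft_incl, H_incl,
    D_incl hD]
  have h1 : Vt k A (n + 1) p' (q + 1) (by omega) (K m T F p' q x) =
    incl k A (n + 1) p' q h (V p' q (K m T F p' q x)) := rfl
  have h2 := Wt_mem (n + 1) p p' (q + 1) (by omega) (by omega) (K m T F p' q x)
  have h3 := H_mem m T F n p (Wt_mem n p p' q h (by omega) x)
  rw [Submodule.mem_comap] at h3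
  have h4 : incl k A (n + 1) p' q h x - incl k A (n + 1) p' q h (Th m T q x) -
      incl k A (n + 1) p' q h (V p' q (K m T F p' q x)) = H m T F n (Vt k A n p' q h x) := by
    cases q with
    | zero =>
      rw [K_zero hT hF hid, map_sub, sub_self]
      exact (map_zero (H m T F n)).symm
    | succ q =>
      refine Eq.trans ?_ (H_incl m T F n p' q (by omega) (V p' q x)).symm
      rw [← map_sub, ← map_sub, ← K_succ hT hF hid]
      congr 1
      abel
  rw [h1, map_add, ← h4]
  have h5 := (Fil k A (n + 1) p).neg_mem ((Fil k A (n + 1) p).add_mem h2 h3)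
  convert h5 using 1
  abel

section abs
variable {T T' : ℕ → Type u} [∀ n, AddCommGroup (T n)] [∀ n, Module k (T n)]
  [∀ n, AddCommGroup (T' n)] [∀ n, Module k (T' n)]

/-- cycles -/
def Cyc (D : ∀ n, T (n + 1) →ₗ[k] T n) : ∀ n, Submodule k (T n)
  | 0 => ⊤
  | n + 1 => LinearMap.ker (D n)

lemma Cyc_map {D : ∀ n, T (n + 1) →ₗ[k] T n} {D' : ∀ n, T' (n + 1) →ₗ[k] T' n}
    {f : ∀ n, T n →ₗ[k] T' n} (hf : ∀ n, (D' n).comp (f (n + 1)) = (f n).comp (D n))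
    {n : ℕ} {z : T n} (hz : z ∈ Cyc D n) : f n z ∈ Cyc D' n := by
  cases n with
  | zero => trivial
  | succ n =>
    have h1 := LinearMap.congr_fun (hf n) z
    simp only [LinearMap.comp_apply] at h1
    have h2 : D n z = 0 := hz
    change D' n (f (n + 1) z) = 0
    rw [h1, h2, map_zero]

lemma Cyc_D {D : ∀ n, T (n + 1) →ₗ[k] T n} (hsq : ∀ n, (D n).comp (D (n + 1)) = 0)
    {n : ℕ} (y : T (n + 1)) : D n y ∈ Cyc D n := by
  cases n with
  | zero => trivial
  | succ n => exact LinearMap.congr_fun (hsq n) y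

lemma range_map {D : ∀ n, T (n + 1) →ₗ[k] T n} {D' : ∀ n, T' (n + 1) →ₗ[k] T' n}
    {f : ∀ n, T n →ₗ[k] T' n} (hf : ∀ n, (D' n).comp (f (n + 1)) = (f n).comp (D n))
    {n : ℕ} {z : T n} (hz : z ∈ LinearMap.range (D n)) : f n z ∈ LinearMap.range (D' n) := by
  obtain ⟨y, rfl⟩ := hz
  exact ⟨f (n + 1) y, LinearMap.congr_fun (hf n) y⟩

/-- projection to homology -/
noncomputable def hpi (D : ∀ n, T (n + 1) →ₗ[k] T n) (hsq : ∀ n, (D n).comp (D (n + 1)) = 0) :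
    ∀ n, Cyc D n →ₗ[k] homologyAt D hsq n
  | 0 => (LinearMap.range (D 0)).mkQ ∘ₗ (Cyc D 0).subtype
  | n + 1 => (LinearMap.range ((D (n + 1)).codRestrict (LinearMap.ker (D n))
      fun x => LinearMap.congr_fun (hsq n) x)).mkQ

lemma hpi_surj (D : ∀ n, T (n + 1) →ₗ[k] T n) (hsq : ∀ n, (D n).comp (D (n + 1)) = 0) (n : ℕ) :
    Function.Surjective (hpi D hsq n) := by
  cases n with
  | zero =>
    intro x
    obtain ⟨y, rfl⟩ := Submodule.mkQ_surjective (LinearMap.range (D 0)) x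
    exact ⟨⟨y, trivial⟩, rfl⟩
  | succ n => exact Submodule.mkQ_surjective _

lemma hpi_zero (D : ∀ n, T (n + 1) →ₗ[k] T n) (hsq : ∀ n, (D n).comp (D (n + 1)) = 0) (n : ℕ)
    (z : Cyc D n) : hpi D hsq n z = 0 ↔ z.1 ∈ LinearMap.range (D n) := by
  cases n with
  | zero => exact Submodule.Quotient.mk_eq_zero (LinearMap.range (D 0))
  | succ n =>
    refine (Submodule.Quotient.mk_eq_zero (LinearMap.range ((D (n + 1)).codRestrict
      (LinearMap.ker (D n)) fun x => LinearMap.congr_fun (hsq n) x))).trans ?_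
    constructor
    · rintro ⟨y, hy⟩
      exact ⟨y, congrArg Subtype.val hy⟩
    · rintro ⟨y, hy⟩
      exact ⟨y, Subtype.ext hy⟩

lemma hpi_map (D : ∀ n, T (n + 1) →ₗ[k] T n) (hsq : ∀ n, (D n).comp (D (n + 1)) = 0)
    (D' : ∀ n, T' (n + 1) →ₗ[k] T' n) (hsq' : ∀ n, (D' n).comp (D' (n + 1)) = 0)
    (f : ∀ n, T n →ₗ[k] T' n)
    (hf : ∀ n, (D' n).comp (f (n + 1)) = (f n).comp (D n)) (n : ℕ) (z : Cyc D n) :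
    inducedMap D hsq D' hsq' f hf n (hpi D hsq n z) =
      hpi D' hsq' n ⟨f n z.1, Cyc_map hf z.2⟩ := by
  cases n with
  | zero => rfl
  | succ n => rfl

lemma equiv_of (D : ∀ n, T (n + 1) →ₗ[k] T n) (hsq : ∀ n, (D n).comp (D (n + 1)) = 0)
    (D' : ∀ n, T' (n + 1) →ₗ[k] T' n) (hsq' : ∀ n, (D' n).comp (D' (n + 1)) = 0)
    (f : ∀ n, T n →ₗ[k] T' n)
    (hf : ∀ n, (D' n).comp (f (n + 1)) = (f n).comp (D n))
    (g : ∀ n, T' n →ₗ[k] T n)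
    (hg : ∀ n, (D n).comp (g (n + 1)) = (g n).comp (D' n))
    (h1 : ∀ n z, z ∈ Cyc D n → g n (f n z) ∈ LinearMap.range (D n) → z ∈ LinearMap.range (D n))
    (h2 : ∀ n z, z ∈ Cyc D' n → ∃ w ∈ Cyc D' n, z - f n (g n w) ∈ LinearMap.range (D' n)) (n : ℕ) :
    Nonempty (homologyAt D hsq n ≃ₗ[k] homologyAt D' hsq' n) := by
  refine ⟨LinearEquiv.ofBijective (inducedMap D hsq D' hsq' f hf n) ⟨?_, ?_⟩⟩
  · rw [injective_iff_map_eq_zero]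
    intro x hx
    obtain ⟨z, rfl⟩ := hpi_surj D hsq n x
    rw [hpi_map, hpi_zero] at hx
    rw [hpi_zero]
    exact h1 n _ z.2 (range_map hg hx)
  · intro x
    obtain ⟨z, rfl⟩ := hpi_surj D' hsq' n x
    obtain ⟨w, hw, h⟩ := h2 n _ z.2
    refine ⟨hpi D hsq n ⟨g n w, Cyc_map hg hw⟩, ?_⟩
    rw [hpi_map, ← sub_eq_zero, ← map_sub, hpi_zero, ← neg_mem_iff]
    simpa using h

end abs

section concrete
variable {D : ∀ n, TotC k A (n + 1) →ₗ[k] TotC k A n}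
    {m : Λ → Λ → A →ₗ[k] A} {T F : Finset Λ}

lemma step (hD : IsTot D) (hT : Good m T) (hF : Good m F)
    (hid : ∀ n x, Th m F n x = x) (n p : ℕ) (z : TotC k A n) (hz : z ∈ Cyc D n)
    (hp : z ∈ Fil k A n (p + 1)) : ∃ y, z - Ft m T n z - D n y ∈ Fil k A n p := by
  refine ⟨H m T F n z, ?_⟩
  cases n with
  | zero => exact step_zero hD hT hF hid p hp
  | succ n =>
    have h := step_succ hD hT hF hid n p hp
    have h2 : D n z = 0 := hz
    simpa [h2] using h

lemma conc_inj (hD : IsTot D) (hsq : ∀ n, (D n).comp (D (n + 1)) = 0)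
    (hT : Good m T) (hF : Good m F)
    (hid : ∀ n x, Th m F n x = x) (n p : ℕ) : ∀ (z : TotC k A n), z ∈ Cyc D n →
    z ∈ Fil k A n p → Ft m T n z ∈ LinearMap.range (D n) → z ∈ LinearMap.range (D n) := by
  have hc := Ft_chain hD hD m T hT
  induction p with
  | zero =>
    intro z _ hp _
    rw [Fil_zero n z hp]
    exact zero_mem _
  | succ p ih =>
    intro z hz hp hF'
    obtain ⟨y, hy⟩ := step hD hT hF hid n p z hz hp
    have hr : D n y ∈ LinearMap.range (D n) := ⟨y, rfl⟩
    have := ih _ (sub_mem (sub_mem hz (Cyc_map hc hz)) (Cyc_D hsq y)) hy (by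
      rw [map_sub, map_sub]
      exact sub_mem (sub_mem hF' (range_map hc hF')) (range_map hc hr))
    have h2 := add_mem (add_mem this hr) hF'
    simpa using h2

lemma conc_surj (hD : IsTot D) (hsq : ∀ n, (D n).comp (D (n + 1)) = 0)
    (hT : Good m T) (hF : Good m F)
    (hid : ∀ n x, Th m F n x = x) (n p : ℕ) : ∀ (z : TotC k A n), z ∈ Cyc D n →
    z ∈ Fil k A n p → ∃ w ∈ Cyc D n, z - Ft m T n w ∈ LinearMap.range (D n) := by
  have hc := Ft_chain hD hD m T hT
  induction p with
  | zero =>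
    intro z _ hp
    refine ⟨0, zero_mem _, ?_⟩
    rw [Fil_zero n z hp, map_zero, sub_zero]
    exact zero_mem _
  | succ p ih =>
    intro z hz hp
    obtain ⟨y, hy⟩ := step hD hT hF hid n p z hz hp
    have hr : D n y ∈ LinearMap.range (D n) := ⟨y, rfl⟩
    obtain ⟨w, hw, h⟩ := ih _ (sub_mem (sub_mem hz (Cyc_map hc hz)) (Cyc_D hsq y)) hy
    refine ⟨w + z, add_mem hw hz, ?_⟩
    have h2 := add_mem h hr
    rw [map_add]
    convert h2 using 1
    abel

end concrete

end Mor

namespace Mor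
open PiTensorProduct
set_option linter.unusedSectionVars false

section
variable {k : Type u} [CommRing k] {A B C : Type u} [Ring A] [Algebra k A] [Ring B] [Algebra k B]
  [Ring C] [Algebra k C] {Λ Λ' : Type}

lemma Th_tprod (m : Λ → Λ → A →ₗ[k] B) (T : Finset Λ) (n : ℕ) (r : Fin (n + 1) → A) :
    Th m T n (PiTensorProduct.tprod k r) = ∑ x ∈ Fintype.piFinset (fun _ : Fin (n + 1) => T),
      PiTensorProduct.tprod k (fun l => m (x l) (x (l + 1)) (r l)) :=
  G_tprod m _ r

lemma Th_comp [Fintype Λ] [Fintype Λ'] (m : Λ → Λ → A →ₗ[k] B) (m' : Λ' → Λ' → B →ₗ[k] C)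
    (n : ℕ) (t : CycChain k A n) :
    Th m' Finset.univ n (Th m Finset.univ n t) =
      Th (fun a b : Λ × Λ' => m' a.2 b.2 ∘ₗ m a.1 b.1) Finset.univ n t := by
  classical
  induction t using PiTensorProduct.induction_on with
  | add x y hx hy => simp only [map_add, hx, hy]
  | smul_tprod a r =>
    simp only [map_smul, Th_tprod, map_sum, Fintype.piFinset_univ]
    congr 1
    rw [← (Equiv.arrowProdEquivProdArrow (Fin (n + 1)) (fun _ => Λ) (fun _ => Λ')).symm.sum_comp,
      Fintype.sum_prod_type]
    rfl

/-- sandwich maps -/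
noncomputable def sw (v u : Λ → A) (x y : Λ) : A →ₗ[k] A :=
  LinearMap.mulLeft k (v x) ∘ₗ LinearMap.mulRight k (u y)

lemma sw_apply (v u : Λ → A) (x y : Λ) (a : A) : sw (k := k) v u x y a = v x * (a * u y) := rfl

lemma sw_good (v u : Λ → A) (s : Finset Λ) (h : ∑ x ∈ s, u x * v x = 1) :
    Good (sw (k := k) v u) s := by
  intro y z a b
  calc _ = ∑ x ∈ s, v y * a * (u x * v x) * (b * u z) :=
        Finset.sum_congr rfl fun x _ => by simp only [sw_apply, mul_assoc]
    _ = v y * a * (∑ x ∈ s, u x * v x) * (b * u z) := by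
        rw [Finset.mul_sum, Finset.sum_mul]
    _ = _ := by rw [h, sw_apply]; simp only [mul_one, mul_assoc]

lemma Th_some [Fintype Λ] (v u : Option Λ → A) (n : ℕ) (t : CycChain k A n) :
    Th (sw v u) (Finset.univ.map Function.Embedding.some) n t =
      Th (sw (fun x => v (some x)) (fun x => u (some x))) Finset.univ n t := by
  classical
  induction t using PiTensorProduct.induction_on with
  | add x y hx hy => simp only [map_add, hx, hy]
  | smul_tprod a r =>
    simp only [map_smul, Th_tprod]
    congr 1
    symm
    refine Finset.sum_bij (fun x _ l => some (x l)) ?_ ?_ ?_ ?_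
    · intro x _; simp
    · intro x _ y _ h; funext l; exact Option.some_injective _ (congrFun h l)
    · intro y hy
      have : ∀ l, ∃ a, some a = y l := by simpa using hy
      choose x hx using this
      exact ⟨x, by simp, funext hx⟩
    · intro x _; rfl

lemma Th_none (v u : Option Λ → A) (hv : v none = 1) (hu : u none = 1) (n : ℕ)
    (t : CycChain k A n) : Th (sw v u) {none} n t = t := by
  classical
  induction t using PiTensorProduct.induction_on with
  | add x y hx hy => simp only [map_add, hx, hy]
  | smul_tprod a r =>
    simp only [map_smul, Th_tprod, Fintype.piFinset_singleton, Finset.sum_singleton, sw_apply,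
      hv, hu, one_mul, mul_one]

lemma Ft_congr {Λ' : Type} (m : Λ → Λ → A →ₗ[k] B) (T : Finset Λ) (m' : Λ' → Λ' → A →ₗ[k] B)
    (T' : Finset Λ') (h : ∀ n x, Th m T n x = Th m' T' n x) (n : ℕ) : Ft m T n = Ft m' T' n := by
  refine tot_ext fun p q e x => ?_
  rw [Ft_incl, Ft_incl, h]

lemma sw_main [Fintype Λ] {D : ∀ n, TotC k A (n + 1) →ₗ[k] TotC k A n}
    (hD : IsTot D) (hsq : ∀ n, (D n).comp (D (n + 1)) = 0) (v u : Λ → A)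
    (h : ∑ x, u x * v x = 1) (n : ℕ) (z : TotC k A n) (hz : z ∈ Cyc D n) :
    (Ft (sw (k := k) v u) Finset.univ n z ∈ LinearMap.range (D n) → z ∈ LinearMap.range (D n)) ∧
    ∃ w ∈ Cyc D n, z - Ft (sw (k := k) v u) Finset.univ n w ∈ LinearMap.range (D n) := by
  have hT : Good (k := k) (sw (fun x : Option Λ => x.elim 1 v) (fun x => x.elim 1 u))
      (Finset.univ.map Function.Embedding.some) := sw_good _ _ _ (by simpa using h)
  have hF : Good (k := k) (sw (fun x : Option Λ => x.elim 1 v) (fun x => x.elim 1 u))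
      {none} := sw_good _ _ _ (by simp)
  have hid : ∀ n (x : CycChain k A n), Th (sw (fun x : Option Λ => x.elim 1 v)
    (fun x => x.elim 1 u)) {none} n x = x := Th_none _ _ rfl rfl
  have he : Ft (sw (k := k) (fun x : Option Λ => x.elim 1 v) (fun x => x.elim 1 u))
      (Finset.univ.map Function.Embedding.some) n = Ft (sw (k := k) v u) Finset.univ n :=
    Ft_congr _ _ _ _ (Th_some (k := k) (fun x : Option Λ => x.elim 1 v)
      (fun x => x.elim 1 u)) n
  rw [← he]
  exact ⟨conc_inj hD hsq hT hF hid n (n + 1) z hz (Fil_top n z),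
    conc_surj hD hsq hT hF hid n (n + 1) z hz (Fil_top n z)⟩

lemma Ft_comp [Fintype Λ] [Fintype Λ'] (m : Λ → Λ → A →ₗ[k] B) (m' : Λ' → Λ' → B →ₗ[k] A)
    (v u : Λ × Λ' → A) (h : ∀ i i' j j' a, m' j j' (m i i' a) = v (i, j) * (a * u (i', j')))
    (n : ℕ) (z : TotC k A n) :
    Ft m' Finset.univ n (Ft m Finset.univ n z) = Ft (sw (k := k) v u) Finset.univ n z := by
  have : (Ft m' Finset.univ n).comp (Ft m Finset.univ n) = Ft (sw (k := k) v u) Finset.univ n := by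
    refine tot_ext fun p q e x => ?_
    rw [LinearMap.comp_apply, Ft_incl, Ft_incl, Ft_incl, Th_comp]
    have h2 : (fun a b : Λ × Λ' => m' a.2 b.2 ∘ₗ m a.1 b.1) = sw v u := by
      funext a b
      refine LinearMap.ext fun x => ?_
      exact h _ _ _ _ _
    rw [h2]
  exact LinearMap.congr_fun this z

lemma exists_fin {M N : Type u} [AddCommGroup M] [Module k M] [AddCommGroup N] [Module k N]
    (x : TensorProduct k M N) : ∃ (d : ℕ) (a : Fin d → M) (b : Fin d → N),
      x = ∑ i, a i ⊗ₜ[k] b i := by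
  obtain ⟨S, hS⟩ := TensorProduct.exists_finset x
  refine ⟨S.card, fun i => (S.equivFin.symm i).1.1, fun i => (S.equivFin.symm i).1.2, ?_⟩
  rw [hS, ← Finset.sum_coe_sort, ← S.equivFin.symm.sum_comp]
end

section
variable {k R S P Q : Type u} [CommRing k] [Ring R] [Ring S] [Algebra k R] [Algebra k S]
    [AddCommGroup P] [Module k P] [Module S P] [Module Rᵐᵒᵖ P]
    [SMulCommClass S Rᵐᵒᵖ P] [IsScalarTower k S P] [IsScalarTower k Rᵐᵒᵖ P]
    [AddCommGroup Q] [Module k Q] [Module R Q] [Module Sᵐᵒᵖ Q]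
    [SMulCommClass R Sᵐᵒᵖ Q] [IsScalarTower k R Q] [IsScalarTower k Sᵐᵒᵖ Q]

/-- swapped context -/
def swp (c : MoritaContext k R S P Q) : MoritaContext k S R Q P where
  φ := c.ψ
  ψ := c.φ
  φ_ker := c.ψ_ker
  φ_surj := c.ψ_surj
  ψ_ker := c.φ_ker
  ψ_surj := c.φ_surj
  φ_left := c.ψ_left
  φ_right := c.ψ_right
  ψ_left := c.φ_left
  ψ_right := c.φ_right
  assoc_φψ := c.assoc_ψφ
  assoc_ψφ := c.assoc_φψ

/-- matrix entries of the trace -/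
noncomputable def mm (c : MoritaContext k R S P Q) {d : ℕ} (p : Fin d → P) (q : Fin d → Q)
    (i j : Fin d) : R →ₗ[k] S where
  toFun r := c.φ (op r • p i) (q j)
  map_add' x y := by rw [op_add, add_smul, map_add, LinearMap.add_apply]
  map_smul' x y := by
    rw [op_smul, smul_assoc, map_smul, LinearMap.smul_apply]; rfl

lemma mm_apply (c : MoritaContext k R S P Q) {d : ℕ} (p : Fin d → P) (q : Fin d → Q)
    (i j : Fin d) (r : R) : mm c p q i j r = c.φ (op r • p i) (q j) := rfl

lemma mm_good (c : MoritaContext k R S P Q) {d : ℕ} (p : Fin d → P) (q : Fin d → Q)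
    (h : ∑ i, c.ψ (q i) (p i) = 1) : Good (mm c p q) Finset.univ := by
  intro y z a b
  have h1 : ∀ x, mm c p q y x a * mm c p q x z b =
      c.φ (op (c.ψ (q x) (p x) * b) • op a • p y) (q z) := by
    intro x
    rw [mm_apply, mm_apply, ← c.φ_left, c.assoc_φψ, c.ψ_right]
  simp only [h1]
  have h2 : ∑ x, op (c.ψ (q x) (p x) * b) • op a • p y = op b • op a • p y := by
    rw [← Finset.sum_smul]
    congr 1
    calc _ = op (∑ x, c.ψ (q x) (p x) * b) :=
          (map_sum (opAddEquiv : R ≃+ Rᵐᵒᵖ) _ _).symm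
      _ = _ := by rw [← Finset.sum_mul, h, one_mul]
  calc _ = c.φ (∑ x, op (c.ψ (q x) (p x) * b) • op a • p y) (q z) := by
        rw [map_sum, LinearMap.sum_apply]
    _ = _ := by rw [h2, smul_smul, ← op_mul, mm_apply]

lemma mm_comp (c : MoritaContext k R S P Q) {d d' : ℕ} (p : Fin d → P) (q : Fin d → Q)
    (p' : Fin d' → P) (q' : Fin d' → Q) (i i' j j') (a : R) :
    mm (swp c) q' p' j j' (mm c p q i i' a) =
      c.ψ (q' j) (p i) * (a * c.ψ (q i') (p' j')) := by
  rw [mm_apply, mm_apply]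
  change c.ψ (op (c.φ (op a • p i) (q i')) • q' j) (p' j') = _
  rw [← c.assoc_ψφ, c.ψ_left, c.ψ_right, mul_assoc]

lemma mm_one (c : MoritaContext k R S P Q) {d d' : ℕ} (p : Fin d → P) (q : Fin d → Q)
    (p' : Fin d' → P) (q' : Fin d' → Q) (h : ∑ i, c.ψ (q i) (p i) = 1)
    (h' : ∑ i, c.φ (p' i) (q' i) = 1) :
    ∑ x : Fin d × Fin d', c.ψ (q x.1) (p' x.2) * c.ψ (q' x.2) (p x.1) = 1 := by
  rw [Fintype.sum_prod_type, ← h]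
  refine Finset.sum_congr rfl fun i _ => ?_
  have h1 : ∀ j, c.ψ (q i) (p' j) * c.ψ (q' j) (p i) =
      c.ψ (op (c.φ (p' j) (q' j)) • q i) (p i) := fun j => by
    rw [← c.ψ_left, c.assoc_ψφ]
  have h2 : ∑ j, op (c.φ (p' j) (q' j)) • q i = q i := by
    rw [← Finset.sum_smul]
    have : ∑ j, op (c.φ (p' j) (q' j)) = op (∑ j, c.φ (p' j) (q' j)) :=
      (map_sum (opAddEquiv : S ≃+ Sᵐᵒᵖ) _ _).symm
    rw [this, h', op_one, one_smul]
  simp only [h1]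
  rw [← LinearMap.sum_apply, ← map_sum, h2]

lemma ex_one (c : MoritaContext k R S P Q) : ∃ (d : ℕ) (p : Fin d → P) (q : Fin d → Q),
    ∑ i, c.ψ (q i) (p i) = 1 := by
  obtain ⟨x, hx⟩ := c.ψ_surj 1
  obtain ⟨d, q, p, rfl⟩ := exists_fin x
  refine ⟨d, p, q, ?_⟩
  rw [← hx, map_sum]
  rfl

lemma main (c : MoritaContext k R S P Q)
    (DR : ∀ n, TotC k R (n + 1) →ₗ[k] TotC k R n)
    (DS : ∀ n, TotC k S (n + 1) →ₗ[k] TotC k S n)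
    (hDR : IsTot DR) (hDS : IsTot DS)
    (hDR_sq : ∀ n, (DR n).comp (DR (n + 1)) = 0)
    (hDS_sq : ∀ n, (DS n).comp (DS (n + 1)) = 0) (n : ℕ) :
    Nonempty (homologyAt DR hDR_sq n ≃ₗ[k] homologyAt DS hDS_sq n) := by
  obtain ⟨d, p, q, h⟩ := ex_one c
  obtain ⟨d', q', p', h'⟩ := ex_one (swp c)
  have h'' : ∑ i, c.φ (p' i) (q' i) = 1 := h'
  refine equiv_of DR hDR_sq DS hDS_sq (Ft (mm c p q) Finset.univ)
    (Ft_chain hDR hDS _ _ (mm_good c p q h)) (Ft (mm (swp c) q' p') Finset.univ)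
    (Ft_chain hDS hDR _ _ (mm_good (swp c) q' p' h')) ?_ ?_ n
  · intro n z hz
    rw [Ft_comp _ _ (fun x : Fin d × Fin d' => c.ψ (q' x.2) (p x.1)) (fun x => c.ψ (q x.1) (p' x.2))
      (fun i i' j j' a => mm_comp c p q p' q' i i' j j' a)]
    exact (sw_main hDR hDR_sq _ _ (mm_one c p q p' q' h h'') n z hz).1
  · intro n z hz
    have := (sw_main hDS hDS_sq (fun x : Fin d' × Fin d => c.φ (p x.2) (q' x.1))
      (fun x => c.φ (p' x.1) (q x.2)) (mm_one (swp c) q' p' q p h' h) n z hz).2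
    obtain ⟨w, hw, h3⟩ := this
    refine ⟨w, hw, ?_⟩
    rwa [Ft_comp (mm (swp c) q' p') (mm c p q) (fun x : Fin d' × Fin d => c.φ (p x.2) (q' x.1))
      (fun x => c.φ (p' x.1) (q x.2))
      (fun i i' j j' a => mm_comp (swp c) q' p' q p i i' j j' a)]
end

end Mor

/-- Let `(R, S, P, Q, φ, ψ)` be a Morita context over `k`.  Then for every
`n ≥ 0` there is a `k`-module isomorphism `HC_n(R) ≅ HC_n(S)` between the cyclic homologies
of `R` and `S` (Morita invariance of cyclic homology of associative algebras).  Here `HC_•(A)`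
is the homology of the total complex of Tsygan's cyclic bicomplex `CC_{p,q} = A^{⊗(q+1)}`:
the total differential `D` acts on the component `p` (with `p + q = n + 1`) by the vertical
differential (`b = Σ_{i} (−1)^i d_i` on even-indexed columns, `−b' = −Σ_{i≤q} (−1)^i d_i` on
odd-indexed columns) plus the horizontal differential into the component `p − 1`
(`1 − λ` for `p` odd and `N = Σ_i λ^i` for `p` even, where `λ = (−1)^q t_q` is the signed
cyclic operator). -/
theorem morita_invariance_cyclic_homology
    (k R S P Q : Type u) [CommRing k] [Ring R] [Ring S] [Algebra k R] [Algebra k S]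
    [AddCommGroup P] [Module k P] [Module S P] [Module Rᵐᵒᵖ P]
    [SMulCommClass S Rᵐᵒᵖ P] [IsScalarTower k S P] [IsScalarTower k Rᵐᵒᵖ P]
    [AddCommGroup Q] [Module k Q] [Module R Q] [Module Sᵐᵒᵖ Q]
    [SMulCommClass R Sᵐᵒᵖ Q] [IsScalarTower k R Q] [IsScalarTower k Sᵐᵒᵖ Q]
    (ctx : MoritaContext k R S P Q)
    -- the total differentials of the cyclic bicomplexes of `R` and of `S`
    (DR : ∀ n, TotC k R (n + 1) →ₗ[k] TotC k R n)
    (DS : ∀ n, TotC k S (n + 1) →ₗ[k] TotC k S n)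
    (hDR : ∀ (n : ℕ) (p : Fin (n + 2)) (r : Fin ((n + 1) - p.val + 1) → R),
      DR n (DirectSum.lof k (Fin (n + 2)) (fun p' => CycChain k R ((n + 1) - p'.val)) p
          (cgen k r)) =
        (if h : p.val ≤ n then
          DirectSum.lof k (Fin (n + 1)) (fun p' => CycChain k R (n - p'.val))
            ⟨p.val, by omega⟩
            (if Even p.val then
              ∑ i : Fin ((n - p.val) + 2), ((-1 : ℤ) ^ i.val) •
                cgen k (faceTuple (fun t => r (Fin.cast (by omega) t)) i)
            else
              -∑ i : Fin ((n - p.val) + 1), ((-1 : ℤ) ^ i.val) •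
                cgen k (faceTuple (fun t => r (Fin.cast (by omega) t)) i.castSucc))
        else 0)
        +
        (if h2 : 1 ≤ p.val then
          DirectSum.lof k (Fin (n + 1)) (fun p' => CycChain k R (n - p'.val))
            ⟨p.val - 1, by have := p.isLt; omega⟩
            (if Even p.val then
              ∑ i : Fin ((n - (p.val - 1)) + 1), ((-1 : ℤ) ^ ((n - (p.val - 1)) * i.val)) •
                cgen (n := n - (p.val - 1)) k (fun l =>
                  r (Fin.cast (by have := p.isLt; omega) (l + i)))
            else
              cgen (n := n - (p.val - 1)) k
                  (fun t => r (Fin.cast (by have := p.isLt; omega) t))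
                - ((-1 : ℤ) ^ (n - (p.val - 1))) •
                  cgen (n := n - (p.val - 1)) k (fun l =>
                    r (Fin.cast (by have := p.isLt; omega) (l + 1))))
        else 0))
    (hDS : ∀ (n : ℕ) (p : Fin (n + 2)) (s : Fin ((n + 1) - p.val + 1) → S),
      DS n (DirectSum.lof k (Fin (n + 2)) (fun p' => CycChain k S ((n + 1) - p'.val)) p
          (cgen k s)) =
        (if h : p.val ≤ n then
          DirectSum.lof k (Fin (n + 1)) (fun p' => CycChain k S (n - p'.val))
            ⟨p.val, by omega⟩
            (if Even p.val then
              ∑ i : Fin ((n - p.val) + 2), ((-1 : ℤ) ^ i.val) •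
                cgen k (faceTuple (fun t => s (Fin.cast (by omega) t)) i)
            else
              -∑ i : Fin ((n - p.val) + 1), ((-1 : ℤ) ^ i.val) •
                cgen k (faceTuple (fun t => s (Fin.cast (by omega) t)) i.castSucc))
        else 0)
        +
        (if h2 : 1 ≤ p.val then
          DirectSum.lof k (Fin (n + 1)) (fun p' => CycChain k S (n - p'.val))
            ⟨p.val - 1, by have := p.isLt; omega⟩
            (if Even p.val then
              ∑ i : Fin ((n - (p.val - 1)) + 1), ((-1 : ℤ) ^ ((n - (p.val - 1)) * i.val)) •
                cgen (n := n - (p.val - 1)) k (fun l =>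
                  s (Fin.cast (by have := p.isLt; omega) (l + i)))
            else
              cgen (n := n - (p.val - 1)) k
                  (fun t => s (Fin.cast (by have := p.isLt; omega) t))
                - ((-1 : ℤ) ^ (n - (p.val - 1))) •
                  cgen (n := n - (p.val - 1)) k (fun l =>
                    s (Fin.cast (by have := p.isLt; omega) (l + 1))))
        else 0))
    (hDR_sq : ∀ n, (DR n).comp (DR (n + 1)) = 0)
    (hDS_sq : ∀ n, (DS n).comp (DS (n + 1)) = 0) :
    ∀ n : ℕ, Nonempty (homologyAt DR hDR_sq n ≃ₗ[k] homologyAt DS hDS_sq n) := by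
  exact Mor.main ctx DR DS (fun n p hp r => hDR n ⟨p, hp⟩ r) (fun n p hp r => hDS n ⟨p, hp⟩ r)
    hDR_sq hDS_sq
end

section
/- Let (R,S,P,Q,φ,ψ) be a Morita context over k and M an (R,R)-bimodule with symmetric k-action. Then θ_• is a morphism of chain complexes: for every n ≥ 1, b ∘ θ_n = θ_{n−1} ∘ b as maps C_n(R,M) → C_{n−1}(S,M̃). -/
open scoped TensorProduct
open MulOpposite

universe u

theorem hgen_sum_aux {k A N ι : Type u} [CommRing k] [Ring A] [Algebra k A] [AddCommGroup N]
    [Module k N] [Fintype ι] {n : ℕ} (m : N) (j : Fin n) (t : ι → Fin n → A) (t' : Fin n → A)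
    (h : ∀ x l, l ≠ j → t x l = t' l) (hj : ∑ x, t x j = t' j) :
    ∑ x, hgen k m (t x) = hgen k m t' := by
  have h1 : ∀ x, t x = Function.update t' j (t x j) := by
    intro x
    funext l
    by_cases hl : l = j
    · subst hl; simp
    · rw [Function.update_of_ne hl, h x l hl]
  unfold hgen
  rw [← TensorProduct.tmul_sum]
  congr 1
  calc _ = ∑ x, PiTensorProduct.tprod k (Function.update t' j (t x j)) :=
        Finset.sum_congr rfl (fun x _ => by rw [← h1 x])
    _ = _ := by
        rw [← MultilinearMap.map_update_sum, hj, Function.update_eq_self]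

theorem hgen_sum_left {k A N ι : Type u} [CommRing k] [Ring A] [Algebra k A] [AddCommGroup N]
    [Module k N] [Fintype ι] {n : ℕ} (m : ι → N) (m' : N) (t : Fin n → A)
    (h : ∑ x, m x = m') :
    ∑ x, hgen k (m x) t = hgen k m' t := by
  unfold hgen
  rw [← TensorProduct.sum_tmul, h]

theorem sum_insert_aux {ι : Type u} {V : Type*} [Fintype ι] [AddCommMonoid V] {n : ℕ}
    (c : Fin (n + 1)) (F : (Fin (n + 1) → ι) → V) :
    ∑ f, F f = ∑ g : Fin n → ι, ∑ x : ι, F (c.insertNth (α := fun _ => ι) x g) := by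
  rw [← (Fin.insertNthEquiv (fun _ => ι) c).sum_comp, Fintype.sum_prod_type, Finset.sum_comm]
  rfl

theorem insert_same_aux {ι : Type u} {n : ℕ} (c i : Fin (n + 1)) (x : ι) (g : Fin n → ι)
    (h : i.val = c.val) : c.insertNth (α := fun _ => ι) x g i = x := by
  obtain rfl : i = c := Fin.ext h
  simp

theorem insert_ne_aux {ι : Type u} {n : ℕ} (c i : Fin (n + 1)) (a : Fin n) (x : ι) (g : Fin n → ι)
    (h : i.val = if a.val < c.val then a.val else a.val + 1) :
    c.insertNth (α := fun _ => ι) x g i = g a := by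
  obtain rfl : i = c.succAbove a := by
    apply Fin.ext
    rw [h]
    unfold Fin.succAbove
    simp only [Fin.lt_def, Fin.val_castSucc]
    split_ifs <;> simp
  simp

theorem val_next_aux {n : ℕ} (i : Fin (n + 1)) :
    (i + 1).val = if i.val = n then 0 else i.val + 1 := by
  rw [Fin.val_add_one]
  simp only [Fin.ext_iff, Fin.val_last]

theorem val_one_aux {n : ℕ} : (1 : Fin (n + 1)).val = if n = 0 then 0 else 1 := by
  cases n <;> simp

/-- Let `(R, S, P, Q, φ, ψ)` be a Morita context over `k` and `M` an
`(R,R)`-bimodule with symmetric `k`-action.  Then `θ_•` is a morphism of chain complexes: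
for every `n ≥ 1`, `b ∘ θ_n = θ_{n−1} ∘ b` as maps `C_n(R, M) → C_{n−1}(S, M̃)`  (below,
degrees are shifted so that the statement for all `n : ℕ` is exactly the statement for all
`n ≥ 1` of the paper). -/
theorem theta_chain_map
    (k R S P Q M Mt : Type u) [CommRing k] [Ring R] [Ring S] [Algebra k R] [Algebra k S]
    [AddCommGroup P] [Module k P] [Module S P] [Module Rᵐᵒᵖ P]
    [SMulCommClass S Rᵐᵒᵖ P] [IsScalarTower k S P] [IsScalarTower k Rᵐᵒᵖ P]
    [AddCommGroup Q] [Module k Q] [Module R Q] [Module Sᵐᵒᵖ Q]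
    [SMulCommClass R Sᵐᵒᵖ Q] [IsScalarTower k R Q] [IsScalarTower k Sᵐᵒᵖ Q]
    [AddCommGroup M] [Module k M] [Module R M] [Module Rᵐᵒᵖ M]
    [SMulCommClass R Rᵐᵒᵖ M] [IsScalarTower k R M] [IsScalarTower k Rᵐᵒᵖ M]
    [AddCommGroup Mt] [Module k Mt] [Module S Mt] [Module Sᵐᵒᵖ Mt]
    [SMulCommClass S Sᵐᵒᵖ Mt] [IsScalarTower k S Mt] [IsScalarTower k Sᵐᵒᵖ Mt]
    -- the Morita context and the fixed finite families with `Σⱼ φ(p'ⱼ ⊗ q'ⱼ) = 1_S`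
    -- and `Σᵢ ψ(qᵢ ⊗ pᵢ) = 1_R`
    (ctx : MoritaContext k R S P Q)
    (ι κ : Type u) [Fintype ι] [Fintype κ]
    (pI : ι → P) (qI : ι → Q) (pJ : κ → P) (qJ : κ → Q)
    (hI : ∑ i : ι, ctx.ψ (qI i) (pI i) = 1)
    (hJ : ∑ j : κ, ctx.φ (pJ j) (qJ j) = 1)
    -- `Mt` plays the role of `M̃ = P ⊗_R M ⊗_R Q`, with `emb p m q` the class of
    -- `p ⊗ m ⊗ q`; it is an `(S,S)`-bimodule spanned by these classes, the `S`-actions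
    -- being `s·(p ⊗ m ⊗ q)·s' = (s·p) ⊗ m ⊗ (q·s')`, and the tensor products are
    -- balanced over `R`
    (emb : P →ₗ[k] M →ₗ[k] Q →ₗ[k] Mt)
    (hemb_bal₁ : ∀ (r : R) (p : P) (m : M) (q : Q), emb (op r • p) m q = emb p (r • m) q)
    (hemb_bal₂ : ∀ (r : R) (p : P) (m : M) (q : Q), emb p (op r • m) q = emb p m (r • q))
    (hemb_left : ∀ (s : S) (p : P) (m : M) (q : Q), emb (s • p) m q = s • emb p m q)
    (hemb_right : ∀ (s : S) (p : P) (m : M) (q : Q), emb p m (op s • q) = op s • emb p m q)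
    (hemb_span : Submodule.span k {x : Mt | ∃ (p : P) (m : M) (q : Q), emb p m q = x} = ⊤)
    -- the Hochschild boundaries of `C_•(R, M)` and `C_•(S, M̃)`
    (bR : ∀ n, HChain k R M (n + 1) →ₗ[k] HChain k R M n)
    (hbR : ∀ (n : ℕ) (m : M) (r : Fin (n + 1) → R),
      bR n (hgen k m r) =
        hgen k (r (Fin.last n) • m) (Fin.init r)
          + ∑ j : Fin n, ((-1 : ℤ) ^ (n - j.val)) • hgen k m (mergeAt r j)
          + ((-1 : ℤ) ^ (n + 1)) • hgen k (op (r 0) • m) (Fin.tail r))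
    (bS : ∀ n, HChain k S Mt (n + 1) →ₗ[k] HChain k S Mt n)
    (hbS : ∀ (n : ℕ) (m : Mt) (s : Fin (n + 1) → S),
      bS n (hgen k m s) =
        hgen k (s (Fin.last n) • m) (Fin.init s)
          + ∑ j : Fin n, ((-1 : ℤ) ^ (n - j.val)) • hgen k m (mergeAt s j)
          + ((-1 : ℤ) ^ (n + 1)) • hgen k (op (s 0) • m) (Fin.tail s))
    -- the chain map `θ_•`
    (θ : ∀ n, HChain k R M n →ₗ[k] HChain k S Mt n)
    (hθ : ∀ (n : ℕ) (m : M) (r : Fin n → R),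
      θ n (hgen k m r) =
        ∑ f : Fin (n + 1) → ι,
          hgen k (emb (pI (f 0)) m (qI (f 1)))
            (fun l : Fin n => ctx.φ (pI (f l.succ)) (r l • qI (f (l.succ + 1)))))
 :
    ∀ n : ℕ, (bS n).comp (θ (n + 1)) = (θ n).comp (bR n) := by
  intro n
  have key : ∀ (m : M) (r : Fin (n + 1) → R),
      bS n (θ (n + 1) (hgen k m r)) = θ n (bR n (hgen k m r)) := by
    intro m r
    rw [hθ, hbR, map_sum]
    simp only [hbS, map_add, map_sum, map_zsmul, hθ, Finset.sum_add_distrib, Finset.smul_sum]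
    congr 1
    · congr 1
      · -- d_0
        rw [sum_insert_aux 0]
        symm
        refine Fintype.sum_equiv
          ((Equiv.addRight (1 : Fin (n + 1))).symm.arrowCongr (Equiv.refl ι)) _ _ fun g => ?_
        symm
        have hh : ∀ x i a, i.val ≠ 0 → (a.val = if i.val = n + 1 then 0 else i.val) →
            (0 : Fin (n + 1 + 1)).insertNth (α := fun _ => ι) x
              (((Equiv.addRight (1 : Fin (n + 1))).symm.arrowCongr (Equiv.refl ι)) g) i
              = g a := by
          intro x i a hi ha
          rw [insert_ne_aux 0 i (i.pred (fun h => hi (by rw [h]; rfl))) x _ (by simp; omega)]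
          simp only [Equiv.arrowCongr_apply, Equiv.symm_symm, Function.comp, Equiv.refl_apply, Equiv.coe_addRight]
          congr 1
          apply Fin.ext
          rw [val_next_aux, ha]
          simp only [Fin.val_pred]
          split_ifs <;> omega
        refine Eq.trans (Finset.sum_congr rfl fun x _ => congrArg₂ (hgen k)
          (x' := emb (op (r (Fin.last n) * ctx.ψ (qI x) (pI x)) • pI (g 0)) m (qI (g 1)))
          (y' := fun l : Fin n => ctx.φ (pI (g l.succ)) (r l.castSucc • qI (g (l.succ + 1))))
          ?_ ?_) ?_
        · rw [insert_same_aux 0 0 x _ rfl, insert_same_aux 0 ((Fin.last n).succ + 1) x _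
            (by rw [val_next_aux]; simp), hh x (Fin.last n).succ 0 (by simp) (by simp),
            hh x 1 1 (by simp) (by rw [val_one_aux, val_one_aux]; split_ifs <;> omega),
            ← hemb_left, ctx.assoc_φψ, ctx.ψ_left]
        · funext l
          have := l.isLt
          simp only [Fin.init]
          rw [hh x l.castSucc.succ l.succ (by simp) (by simp; omega),
            hh x (l.castSucc.succ + 1) (l.succ + 1)
              (by rw [val_next_aux]; simp; omega)
              (by
                rw [val_next_aux, val_next_aux]
                simp only [Fin.val_succ, Fin.val_castSucc]
                split_ifs <;> omega)]
        · apply hgen_sum_left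
          simp only [hemb_bal₁]
          rw [← LinearMap.sum_apply, ← map_sum, ← Finset.sum_smul, ← Finset.mul_sum, hI, mul_one]
      · rw [Finset.sum_comm]
        refine Finset.sum_congr rfl fun j _ => ?_
        simp only [← Finset.smul_sum]
        congr 1
        rw [sum_insert_aux j.succ.succ]
        refine Finset.sum_congr rfl fun g _ => ?_
        have hjn := j.isLt
        have e0 : ∀ x, j.succ.succ.insertNth (α := fun _ => ι) x g 0 = g 0 := fun x =>
          insert_ne_aux _ _ _ _ _ (by simp)
        have e1 : ∀ x, j.succ.succ.insertNth (α := fun _ => ι) x g 1 = g 1 := fun x =>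
          insert_ne_aux _ _ _ _ _ (by
            rw [val_one_aux, val_one_aux]
            simp only [Fin.val_succ]
            split_ifs <;> omega)
        simp only [e0, e1]
        apply hgen_sum_aux _ j
        · intro x l hl
          have hln := l.isLt
          have hl' : l.val ≠ j.val := fun h => hl (Fin.ext h)
          simp only [mergeAt]
          rcases lt_or_gt_of_ne hl' with h | h
          · rw [if_pos h, if_pos h,
              insert_ne_aux j.succ.succ l.castSucc.succ l.succ x g (by
                simp only [Fin.val_succ, Fin.val_castSucc]
                split_ifs <;> omega),
              insert_ne_aux j.succ.succ (l.castSucc.succ + 1) (l.succ + 1) x g (by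
                simp only [val_next_aux, Fin.val_succ, Fin.val_castSucc]
                split_ifs <;> omega)]
          · rw [if_neg (by omega), if_neg (by omega), if_neg (by omega), if_neg (by omega),
              insert_ne_aux j.succ.succ l.succ.succ l.succ x g (by
                simp only [Fin.val_succ]
                split_ifs <;> omega),
              insert_ne_aux j.succ.succ (l.succ.succ + 1) (l.succ + 1) x g (by
                simp only [val_next_aux, Fin.val_succ]
                split_ifs <;> omega)]
        · simp only [mergeAt, lt_irrefl, if_false, if_true]
          refine Eq.trans (Finset.sum_congr rfl fun x _ => ?_)
            (b := ∑ x, ctx.φ (pI (g j.succ))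
              ((r j.castSucc * ctx.ψ (qI x) (pI x)) • r j.succ • qI (g (j.succ + 1)))) ?_
          · rw [insert_ne_aux j.succ.succ j.castSucc.succ j.succ x g (by
                simp only [Fin.val_succ, Fin.val_castSucc]
                split_ifs <;> omega),
              insert_same_aux j.succ.succ (j.castSucc.succ + 1) x g (by
                simp only [val_next_aux, Fin.val_succ, Fin.val_castSucc]
                split_ifs <;> omega),
              insert_same_aux j.succ.succ j.succ.succ x g rfl,
              insert_ne_aux j.succ.succ (j.succ.succ + 1) (j.succ + 1) x g (by
                simp only [val_next_aux, Fin.val_succ]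
                split_ifs <;> omega),
              ← ctx.φ_right, ← ctx.assoc_ψφ, ctx.ψ_left]
          · rw [← map_sum, ← Finset.sum_smul, ← Finset.mul_sum, hI, mul_one, smul_smul]
    · rw [sum_insert_aux 1]
      simp only [← Finset.smul_sum]
      congr 1
      refine Finset.sum_congr rfl fun g _ => ?_
      refine Eq.trans (Finset.sum_congr rfl fun x _ => congrArg₂ (hgen k)
        (x' := emb (pI (g 0)) m (ctx.ψ (qI x) (pI x) • r 0 • qI (g 1)))
        (y' := fun l : Fin n => ctx.φ (pI (g l.succ)) (r l.succ • qI (g (l.succ + 1))))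
        ?_ ?_) ?_
      · rw [insert_ne_aux 1 0 0 x g (by simp), insert_same_aux 1 1 x g rfl,
          insert_same_aux 1 (Fin.succ 0) x g (by simp),
          insert_ne_aux 1 (Fin.succ 0 + 1) 1 x g (by
            simp only [val_next_aux, val_one_aux, Fin.val_succ, Fin.val_zero]
            by_cases hn : n = 0 <;> simp [hn] <;> omega),
          ← hemb_right, ctx.assoc_ψφ]
      · funext l
        have := l.isLt
        simp only [Fin.tail]
        rw [insert_ne_aux 1 l.succ.succ l.succ x g (by
              simp only [val_one_aux, Fin.val_succ]
              split_ifs <;> omega),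
          insert_ne_aux 1 (l.succ.succ + 1) (l.succ + 1) x g (by
            simp only [val_next_aux, val_one_aux, Fin.val_succ]
            split_ifs <;> omega)]
      · apply hgen_sum_left
        rw [← map_sum, ← Finset.sum_smul, hI, one_smul, hemb_bal₂]
  apply TensorProduct.ext'
  intro m t
  induction t using PiTensorProduct.induction_on with
  | smul_tprod c r =>
    have := key m r
    unfold hgen at this
    rw [TensorProduct.tmul_smul, map_smul, map_smul]
    exact congrArg (c • ·) this
  | add x y hx hy => rw [TensorProduct.tmul_add, map_add, map_add, hx, hy]
end
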